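/- arXiv:1908.10539 — 9 statements merged into one kernel-verified Lean document; each statement's English description precedes it below -/
import Mathlib

section
/- Each harmonic extension matrix A_i for SG_N (N ≥ 3, i ∈ {0,…,N−1}) has spectrum exactly {1, N/(N+2), 1/(N+2)}, the eigenspace for eigenvalue 1 has dimension 1, the eigenspace for eigenvalue N/(N+2) has dimension 1, and the eigenspace for eigenvalue 1/(N+2) has dimension N−2; in particular A_i is invertible. -/
open Matrix Filter

/-- The harmonic extension matrix `A_i` for `SG_N`. -/
noncomputable def harmA (N : ℕ) (i : Fin N) : Matrix (Fin N) (Fin N) ℝ :=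
  Matrix.of fun j k =>
    if j = i then (if k = i then 1 else 0)
    else if k = i then 2 / (N + 2)
    else (1 + if j = k then 1 else 0) / (N + 2)

/-- The energy bilinear form `E(u,v) = ∑_{k<l} (u_k - u_l)(v_k - v_l)` on `ℝ^N`. -/
noncomputable def energy (N : ℕ) (u v : Fin N → ℝ) : ℝ :=
  ∑ k : Fin N, ∑ l : Fin N, if k < l then (u k - u l) * (v k - v l) else 0

lemma harmA_mulVec_self (N : ℕ) (i : Fin N) (u : Fin N → ℝ) :
    (harmA N i *ᵥ u) i = u i := by
  simp [harmA, Matrix.mulVec, dotProduct]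

lemma harmA_mulVec_ne (N : ℕ) (i j : Fin N) (h : j ≠ i) (u : Fin N → ℝ) :
    (harmA N i *ᵥ u) j = (u i + ∑ k, u k + u j) / (N + 2) := by
  have key : ∀ k, harmA N i j k * u k =
      ((if k = i then u k else 0) + u k + (if k = j then u k else 0)) / (N + 2) := by
    intro k
    simp only [harmA, Matrix.of_apply, if_neg h]
    by_cases h1 : k = i
    · subst h1
      simp [Ne.symm h]
      ring
    · by_cases h2 : k = j
      · subst h2
        simp [h1]
        ring
      · simp [h1, h2, Ne.symm h2]
        ring
  simp only [Matrix.mulVec, dotProduct, key]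
  rw [← Finset.sum_div, Finset.sum_add_distrib, Finset.sum_add_distrib]
  simp

lemma harmA_mem_iff (N : ℕ) (i : Fin N) (c : ℝ) (u : Fin N → ℝ) :
    u ∈ Module.End.eigenspace (Matrix.mulVecLin (harmA N i)) c ↔
      u i = c * u i ∧ ∀ j, j ≠ i → u i + ∑ k, u k + u j = (N + 2) * c * u j := by
  have hp : (N : ℝ) + 2 ≠ 0 := by positivity
  rw [Module.End.mem_eigenspace_iff, Matrix.mulVecLin_apply, funext_iff]
  constructor
  · intro h
    refine ⟨?_, fun j hj => ?_⟩
    · simpa [harmA_mulVec_self] using h i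
    · have := h j
      rw [harmA_mulVec_ne N i j hj, div_eq_iff hp] at this
      rw [this]; simp; ring
  · rintro ⟨h1, h2⟩ j
    by_cases hj : j = i
    · subst hj; rw [harmA_mulVec_self]; simpa using h1
    · rw [harmA_mulVec_ne N i j hj, div_eq_iff hp, h2 j hj]; simp; ring

lemma sum_of_ne (N : ℕ) (i : Fin N) (u : Fin N → ℝ) (a b : ℝ)
    (h : ∀ j, j ≠ i → a * u j = b) :
    a * ∑ k, u k = a * u i + (N - 1) * b := by
  rw [← Finset.add_sum_erase _ _ (Finset.mem_univ i), mul_add, Finset.mul_sum,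
    Finset.sum_congr rfl (fun j hj => h j (Finset.ne_of_mem_erase hj))]
  have : 1 ≤ N := by have := i.2; omega
  simp [Finset.card_erase_of_mem, Nat.cast_sub this]

lemma harmA_eig_one (N : ℕ) (i : Fin N) :
    Module.End.eigenspace (Matrix.mulVecLin (harmA N i)) 1 =
      Submodule.span ℝ {fun _ => (1 : ℝ)} := by
  ext u
  rw [harmA_mem_iff, Submodule.mem_span_singleton]
  constructor
  · rintro ⟨-, h⟩
    have hs := sum_of_ne N i u (N + 1) (u i + ∑ k, u k)
      (fun j hj => by linarith [h j hj])
    have hs' : ∑ k, u k = N * u i := by linarith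
    refine ⟨u i, funext fun j => ?_⟩
    by_cases hj : j = i
    · simp [hj]
    · have := h j hj
      rw [hs'] at this
      have hp : (N : ℝ) + 1 ≠ 0 := by positivity
      have : ((N : ℝ) + 1) * u i = (N + 1) * u j := by linarith
      simpa using mul_left_cancel₀ hp this
  · rintro ⟨c, rfl⟩
    refine ⟨by simp, fun j _ => ?_⟩
    simp; ring

lemma harmA_eig_two (N : ℕ) (hN : 3 ≤ N) (i : Fin N) :
    Module.End.eigenspace (Matrix.mulVecLin (harmA N i)) ((N : ℝ) / (N + 2)) =
      Submodule.span ℝ {fun k => if k = i then (0 : ℝ) else 1} := by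
  have hp : (N : ℝ) + 2 ≠ 0 := by positivity
  have hN' : (3 : ℝ) ≤ N := by exact_mod_cast hN
  ext u
  rw [harmA_mem_iff, Submodule.mem_span_singleton, mul_div_cancel₀ _ hp]
  constructor
  · rintro ⟨h0, h⟩
    have h0 : u i = 0 := by
      field_simp at h0
      linarith
    refine ⟨(∑ k, u k) / (N - 1), funext fun j => ?_⟩
    by_cases hj : j = i
    · simp [hj, h0]
    · have := h j hj
      have h1 : (N : ℝ) - 1 ≠ 0 := by linarith
      simp only [Pi.smul_apply, if_neg hj, smul_eq_mul, mul_one]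
      rw [div_eq_iff h1]
      linarith
  · rintro ⟨c, rfl⟩
    refine ⟨by simp, fun j hj => ?_⟩
    have := sum_of_ne N i (c • fun k => if k = i then (0 : ℝ) else 1) 1 c
      (fun j hj => by simp [hj])
    rw [one_mul] at this
    rw [this]
    simp [hj]
    ring

/-- The map `u ↦ (u i, ∑ u)`. -/
def harmPhi (N : ℕ) (i : Fin N) : (Fin N → ℝ) →ₗ[ℝ] ℝ × ℝ :=
  (LinearMap.proj i).prod (∑ k, LinearMap.proj k)

lemma harmPhi_apply (N : ℕ) (i : Fin N) (u : Fin N → ℝ) :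
    harmPhi N i u = (u i, ∑ k, u k) := by
  simp [harmPhi]

lemma harmA_eig_three (N : ℕ) (hN : 3 ≤ N) (i : Fin N) :
    Module.End.eigenspace (Matrix.mulVecLin (harmA N i)) (1 / ((N : ℝ) + 2)) =
      LinearMap.ker (harmPhi N i) := by
  have hp : (N : ℝ) + 2 ≠ 0 := by positivity
  have hN' : (3 : ℝ) ≤ N := by exact_mod_cast hN
  ext u
  rw [harmA_mem_iff, LinearMap.mem_ker, harmPhi_apply, mul_div_cancel₀ _ hp, Prod.mk_eq_zero]
  constructor
  · rintro ⟨h0, h⟩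
    have h0 : u i = 0 := by
      field_simp at h0
      have : (N + 1) * u i = 0 := by linarith
      exact (mul_eq_zero.1 this).resolve_left (by positivity)
    have : Nontrivial (Fin N) := Fin.nontrivial_iff_two_le.2 (by omega)
    obtain ⟨j, hj⟩ := exists_ne i
    exact ⟨h0, by linarith [h j hj]⟩
  · rintro ⟨h0, h⟩
    simp [h0, h]

lemma harmPhi_finrank (N : ℕ) (hN : 3 ≤ N) (i : Fin N) :
    Module.finrank ℝ (LinearMap.ker (harmPhi N i)) = N - 2 := by
  have : Nontrivial (Fin N) := Fin.nontrivial_iff_two_le.2 (by omega)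
  obtain ⟨j, hj⟩ := exists_ne i
  have hsurj : LinearMap.range (harmPhi N i) = ⊤ := by
    rw [LinearMap.range_eq_top]
    rintro ⟨a, b⟩
    refine ⟨Pi.single i a + Pi.single j (b - a), ?_⟩
    rw [harmPhi_apply]
    simp [Finset.sum_add_distrib, hj.symm]
  have := LinearMap.finrank_range_add_finrank_ker (harmPhi N i)
  rw [hsurj] at this
  simp at this
  omega

lemma harmA_spec_iff (N : ℕ) (i : Fin N) (c : ℝ) :
    c ∈ spectrum ℝ (harmA N i) ↔
      Module.End.eigenspace (Matrix.mulVecLin (harmA N i)) c ≠ ⊥ := by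
  rw [← Matrix.spectrum_toLin', ← Module.End.hasEigenvalue_iff_mem_spectrum,
    Module.End.hasEigenvalue_iff, Matrix.toLin'_apply']

theorem spectrum_and_eigenspace_dims_of_harmA (N : ℕ) (hN : 3 ≤ N) (i : Fin N) :
    spectrum ℝ (harmA N i) = {1, (N : ℝ) / (N + 2), 1 / ((N : ℝ) + 2)} ∧
    Module.finrank ℝ (Module.End.eigenspace (Matrix.mulVecLin (harmA N i)) 1) = 1 ∧
    Module.finrank ℝ
      (Module.End.eigenspace (Matrix.mulVecLin (harmA N i)) ((N : ℝ) / (N + 2))) = 1 ∧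
    Module.finrank ℝ
      (Module.End.eigenspace (Matrix.mulVecLin (harmA N i)) (1 / ((N : ℝ) + 2))) = N - 2 ∧
    IsUnit (harmA N i) := by
  have hp : (N : ℝ) + 2 ≠ 0 := by positivity
  have hN' : (3 : ℝ) ≤ N := by exact_mod_cast hN
  have : Nontrivial (Fin N) := Fin.nontrivial_iff_two_le.2 (by omega)
  obtain ⟨j, hj⟩ := exists_ne i
  have d1 : Module.finrank ℝ (Module.End.eigenspace (Matrix.mulVecLin (harmA N i)) 1) = 1 := by
    rw [harmA_eig_one]
    exact finrank_span_singleton (fun h => one_ne_zero (congrFun h i))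
  have d2 : Module.finrank ℝ
      (Module.End.eigenspace (Matrix.mulVecLin (harmA N i)) ((N : ℝ) / (N + 2))) = 1 := by
    rw [harmA_eig_two N hN]
    refine finrank_span_singleton (fun h => ?_)
    have := congrFun h j
    simp [hj] at this
  have d3 : Module.finrank ℝ
      (Module.End.eigenspace (Matrix.mulVecLin (harmA N i)) (1 / ((N : ℝ) + 2))) = N - 2 := by
    rw [harmA_eig_three N hN, harmPhi_finrank N hN]
  have hs : spectrum ℝ (harmA N i) = {1, (N : ℝ) / (N + 2), 1 / ((N : ℝ) + 2)} := by
    ext c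
    rw [harmA_spec_iff]
    simp only [Set.mem_insert_iff, Set.mem_singleton_iff]
    constructor
    · intro h
      obtain ⟨u, hu, hu0⟩ := Submodule.exists_mem_ne_zero_of_ne_bot h
      rw [harmA_mem_iff] at hu
      obtain ⟨h0, h1⟩ := hu
      by_contra! hc
      obtain ⟨c1, c2, c3⟩ := hc
      have c2' : (N + 2) * c - N ≠ 0 := fun h => c2 (by rw [eq_div_iff hp]; linarith)
      have c3' : (N + 2) * c - 1 ≠ 0 := fun h => c3 (by rw [eq_div_iff hp]; linarith)
      have h0 : u i = 0 := by
        have : (c - 1) * u i = 0 := by linarith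
        exact (mul_eq_zero.1 this).resolve_left (sub_ne_zero.2 c1)
      have hS := sum_of_ne N i u ((N + 2) * c - 1) (∑ k, u k)
        (fun j hj => by linarith [h1 j hj])
      have hS0 : ∑ k, u k = 0 := by
        have : ((N + 2) * c - N) * ∑ k, u k = 0 := by rw [h0] at hS; linarith
        exact (mul_eq_zero.1 this).resolve_left c2'
      apply hu0
      funext k
      by_cases hk : k = i
      · simp [hk, h0]
      · have := h1 k hk
        have : ((N + 2) * c - 1) * u k = 0 := by linarith
        exact (mul_eq_zero.1 this).resolve_left c3'
    · rintro (rfl | rfl | rfl) h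
      · rw [h] at d1; simp at d1
      · rw [h] at d2; simp at d2
      · rw [h] at d3; simp at d3; omega
  refine ⟨hs, d1, d2, d3, ?_⟩
  rw [← spectrum.zero_notMem_iff ℝ, hs]
  have hN0 : (N : ℝ) ≠ 0 := by linarith
  simp only [Set.mem_insert_iff, Set.mem_singleton_iff, not_or]
  exact ⟨zero_ne_one, (div_ne_zero hN0 hp).symm, (one_div_ne_zero hp).symm⟩
end

section
/- For the harmonic extension matrix A_i of SG_N (N ≥ 3): the eigenspace of A_i for eigenvalue 1 is exactly the space of constant vectors; the eigenspace for eigenvalue N/(N+2) is exactly the span of the vector whose i-th coordinate is 0 and all other coordinates are 1; and the eigenspace for eigenvalue 1/(N+2) is exactly {v ∈ ℝ^N : v_i = 0 and Σ_{j=0}^{N−1} v_j = 0}. -/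
open Matrix Filter

theorem harmA_row_self (N : ℕ) (i : Fin N) (v : Fin N → ℝ) :
    (harmA N i).mulVec v i = v i := by
  simp [harmA, Matrix.mulVec, dotProduct]

theorem harmA_row_ne (N : ℕ) (i : Fin N) (v : Fin N → ℝ) (j : Fin N) (hj : j ≠ i) :
    (harmA N i).mulVec v j = ((∑ k, v k) + v i + v j) / (N + 2) := by
  have h : ∀ k, harmA N i j k * v k =
      (v k + (if k = i then v k else 0) + (if j = k then v k else 0)) / (N + 2) := by
    intro k
    simp only [harmA, Matrix.of_apply, if_neg hj]
    by_cases hk : k = i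
    · subst hk
      simp [hj]
      ring
    · by_cases hjk : j = k <;> simp [hk, hjk] <;> ring
  simp only [Matrix.mulVec, dotProduct]
  rw [Finset.sum_congr rfl (fun k _ => h k), ← Finset.sum_div]
  simp [Finset.sum_add_distrib]

theorem harmA_eig_iff (N : ℕ) (i : Fin N) (v : Fin N → ℝ) (a : ℝ) :
    (harmA N i).mulVec v = (a / ((N : ℝ) + 2)) • v ↔
      ((N + 2) * v i = a * v i ∧ ∀ j, j ≠ i → (∑ k, v k) + v i + v j = a * v j) := by
  have hp : ((N : ℝ) + 2) ≠ 0 := by positivity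
  constructor
  · intro h
    refine ⟨?_, fun j hj => ?_⟩
    · have := congrFun h i
      rw [harmA_row_self, Pi.smul_apply, smul_eq_mul] at this
      field_simp at this
      linarith
    · have := congrFun h j
      rw [harmA_row_ne N i v j hj, Pi.smul_apply, smul_eq_mul] at this
      field_simp at this
      linarith
  · rintro ⟨h1, h2⟩
    ext j
    rw [Pi.smul_apply, smul_eq_mul]
    by_cases hj : j = i
    · subst hj
      rw [harmA_row_self]
      field_simp
      linarith
    · rw [harmA_row_ne N i v j hj, h2 j hj]
      ring

theorem sum_of_const_off (N : ℕ) (i : Fin N) (v : Fin N → ℝ) (t : ℝ)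
    (h : ∀ j, j ≠ i → v j = t) : ∑ k, v k = v i + (N - 1) * t := by
  have : ∀ k, v k = t + (if k = i then v i - t else 0) := by
    intro k
    by_cases hk : k = i
    · simp [hk]
    · simp [hk, h k hk]
  rw [Finset.sum_congr rfl (fun k _ => this k)]
  simp [Finset.sum_add_distrib]
  ring

theorem eigenspaces_of_harmA (N : ℕ) (hN : 3 ≤ N) (i : Fin N) :
    (∀ v : Fin N → ℝ, (harmA N i).mulVec v = (1 : ℝ) • v ↔ ∃ c : ℝ, v = fun _ => c) ∧
    (∀ v : Fin N → ℝ, (harmA N i).mulVec v = ((N : ℝ) / (N + 2)) • v ↔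
      ∃ c : ℝ, v = c • fun j => if j = i then (0 : ℝ) else 1) ∧
    (∀ v : Fin N → ℝ, (harmA N i).mulVec v = (1 / ((N : ℝ) + 2)) • v ↔
      (v i = 0 ∧ ∑ j, v j = 0)) := by
  have hN' : (3 : ℝ) ≤ N := by exact_mod_cast hN
  have hp : ((N : ℝ) + 2) ≠ 0 := by positivity
  have hm : ((N : ℝ) - 1) ≠ 0 := by linarith
  have hm1 : ((N : ℝ) + 1) ≠ 0 := by positivity
  refine ⟨fun v => ?_, fun v => ?_, fun v => ?_⟩
  · have h1 : (1 : ℝ) = ((N : ℝ) + 2) / (N + 2) := (div_self hp).symm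
    rw [h1, harmA_eig_iff]
    constructor
    · rintro ⟨-, h⟩
      have ht : ∀ j, j ≠ i → v j = ((∑ k, v k) + v i) / (N + 1) := by
        intro j hj
        rw [eq_div_iff hm1]
        linarith [h j hj]
      have hs := sum_of_const_off N i v _ ht
      have hti : ((∑ k, v k) + v i) / (N + 1) = v i := by
        rw [div_eq_iff hm1]
        field_simp at hs
        linarith
      refine ⟨v i, funext fun j => ?_⟩
      by_cases hj : j = i
      · rw [hj]
      · rw [ht j hj, hti]
    · rintro ⟨c, rfl⟩
      refine ⟨rfl, fun j _ => ?_⟩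
      simp
      ring
  · rw [harmA_eig_iff]
    constructor
    · rintro ⟨h0, h⟩
      have hi : v i = 0 := by linarith
      refine ⟨(∑ k, v k) / (N - 1), funext fun j => ?_⟩
      by_cases hj : j = i
      · simp [hj, hi]
      · simp only [Pi.smul_apply, if_neg hj, smul_eq_mul, mul_one]
        rw [eq_div_iff hm]
        linarith [h j hj]
    · rintro ⟨c, hc⟩
      have hi : v i = 0 := by simp [hc]
      have hj : ∀ j, j ≠ i → v j = c := fun j hj => by simp [hc, hj]
      refine ⟨by simp [hi], fun j hji => ?_⟩
      rw [sum_of_const_off N i v c hj, hi, hj j hji]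
      ring
  · rw [harmA_eig_iff]
    constructor
    · rintro ⟨h0, h⟩
      have hi : v i = 0 := by
        have : ((N : ℝ) + 1) * v i = 0 := by linarith
        exact (mul_eq_zero.mp this).resolve_left hm1
      haveI : Nontrivial (Fin N) := Fin.nontrivial_iff_two_le.mpr (by omega)
      obtain ⟨j, hj⟩ := exists_ne i
      exact ⟨hi, by linarith [h j hj]⟩
    · rintro ⟨hi, hs⟩
      refine ⟨by simp [hi], fun j _ => ?_⟩
      rw [hs, hi]
      ring
end

section
/- For each i ∈ {0,…,N−1}, the harmonic extension matrix A_i maps the line W = span{(1,…,1)} to itself, the induced linear map Ã_i on the quotient ℝ^N / W is invertible, and the inverse Ã_i^{−1} has spectrum exactly {(N+2)/N, N+2}, where the eigenspace for (N+2)/N has dimension 1 and the eigenspace for N+2 has dimension N−2. -/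
open Matrix Filter

/-- A rank-one perturbation of the identity: inverse, spectrum and eigenspaces. -/
theorem rank_one_spectrum {V : Type*} [AddCommGroup V] [Module ℝ V] [FiniteDimensional ℝ V]
    (N : ℕ) (hN : 3 ≤ N) (hV : Module.finrank ℝ V = N - 1) (f : V →ₗ[ℝ] ℝ) (d : V)
    (hd : f d = (N : ℝ) - 1) (T : Module.End ℝ V)
    (hT : ∀ x, T x = ((N : ℝ) + 2)⁻¹ • (x + f x • d)) :
    ∃ B : Module.End ℝ V, T ∘ₗ B = LinearMap.id ∧ B ∘ₗ T = LinearMap.id ∧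
        spectrum ℝ B = {((N : ℝ) + 2) / N, (N : ℝ) + 2} ∧
        Module.finrank ℝ (Module.End.eigenspace B (((N : ℝ) + 2) / N)) = 1 ∧
        Module.finrank ℝ (Module.End.eigenspace B ((N : ℝ) + 2)) = N - 2 := by
  have hN3 : (3 : ℝ) ≤ N := by exact_mod_cast hN
  have hN0 : (N : ℝ) ≠ 0 := by linarith
  have hN2 : (N : ℝ) + 2 ≠ 0 := by linarith
  have hN1 : (N : ℝ) - 1 ≠ 0 := by linarith
  have hd0 : d ≠ 0 := by
    rintro rfl
    rw [map_zero] at hd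
    exact hN1 hd.symm
  obtain ⟨B, hB⟩ : ∃ B : Module.End ℝ V,
      ∀ x, B x = ((N : ℝ) + 2) • (x - ((N : ℝ)⁻¹ * f x) • d) :=
    ⟨((N : ℝ) + 2) • (LinearMap.id - (N : ℝ)⁻¹ • f.smulRight d), fun x => by
      simp [smul_smul]⟩
  have hfB : ∀ x, f (B x) = ((N : ℝ) + 2) / N * f x := by
    intro x
    rw [hB]
    simp only [map_smul, map_sub, smul_eq_mul, hd]
    field_simp
    ring
  have e1 : Module.End.eigenspace B (((N : ℝ) + 2) / N) = Submodule.span ℝ {d} := by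
    ext x
    rw [Module.End.mem_eigenspace_iff, Submodule.mem_span_singleton, hB]
    constructor
    · intro h
      refine ⟨((N : ℝ) - 1)⁻¹ * f x, ?_⟩
      have h2 : (((N : ℝ) - 1)⁻¹ * f x) • d - x = -((N : ℝ) / ((N + 2) * (N - 1))) •
          (((N : ℝ) + 2) • (x - ((N : ℝ)⁻¹ * f x) • d) - (((N : ℝ) + 2) / N) • x) := by
        match_scalars <;> field_simp
      rw [h, sub_self, smul_zero, sub_eq_zero] at h2
      exact h2
    · rintro ⟨a, rfl⟩
      rw [map_smul, smul_eq_mul, hd]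
      match_scalars
      field_simp
      ring
  have e2 : Module.End.eigenspace B ((N : ℝ) + 2) = LinearMap.ker f := by
    ext x
    rw [Module.End.mem_eigenspace_iff, LinearMap.mem_ker, hB]
    constructor
    · intro h
      have h2 := smul_right_injective V hN2 h
      simpa [hd0, hN0] using h2
    · intro h
      simp [h]
  have r1 : Module.finrank ℝ (Module.End.eigenspace B (((N : ℝ) + 2) / N)) = 1 := by
    rw [e1]
    exact finrank_span_singleton hd0
  have r2 : Module.finrank ℝ (Module.End.eigenspace B ((N : ℝ) + 2)) = N - 2 := by
    rw [e2]
    have hs : Function.Surjective f := by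
      apply LinearMap.surjective
      rintro rfl
      exact hN1 (by simpa using hd.symm)
    have := LinearMap.finrank_range_add_finrank_ker f
    rw [LinearMap.range_eq_top.2 hs, finrank_top, hV, Module.finrank_self] at this
    omega
  have hasEig : ∀ m : ℝ, 0 < Module.finrank ℝ (Module.End.eigenspace B m) → m ∈ spectrum ℝ B := by
    intro m hm
    rw [← Module.End.hasEigenvalue_iff_mem_spectrum]
    intro hbot
    have hb : Module.End.eigenspace B m = ⊥ := hbot
    rw [hb, finrank_bot] at hm
    exact lt_irrefl _ hm
  refine ⟨B, ?_, ?_, ?_, r1, r2⟩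
  · ext x
    simp only [LinearMap.comp_apply, LinearMap.id_apply]
    rw [hT, hfB, hB]
    match_scalars <;> field_simp
    ring
  · ext x
    simp only [LinearMap.comp_apply, LinearMap.id_apply]
    rw [hB, hT]
    simp only [map_smul, map_add, smul_eq_mul, hd]
    match_scalars <;> field_simp
    ring
  · ext m
    constructor
    · intro h
      rw [← Module.End.hasEigenvalue_iff_mem_spectrum] at h
      obtain ⟨x, hx, hx0⟩ := h.exists_hasEigenvector
      rw [Module.End.mem_eigenspace_iff] at hx
      have h1 := hfB x
      rw [hx, map_smul, smul_eq_mul] at h1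
      by_cases hf : f x = 0
      · right
        rw [hB, hf] at hx
        simp only [mul_zero, zero_smul, sub_zero] at hx
        exact (smul_left_injective ℝ hx0 hx).symm
      · left
        exact mul_right_cancel₀ hf h1
    · rintro (rfl | rfl)
      · exact hasEig _ (by omega)
      · exact hasEig _ (by omega)

theorem harmA_mulVec (N : ℕ) (i : Fin N) (u : Fin N → ℝ) :
    (harmA N i).mulVecLin u = ((N : ℝ) + 2)⁻¹ •
      (u + ((N : ℝ) * u i - ∑ k, u k) • (Pi.single i 1 : Fin N → ℝ)
        + (u i + ∑ k, u k) • (fun _ => 1)) := by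
  have hN2 : (N : ℝ) + 2 ≠ 0 := by positivity
  ext j
  rw [Matrix.mulVecLin_apply, Matrix.mulVec, dotProduct]
  by_cases hj : j = i
  · subst hj
    simp [harmA]
    field_simp
    ring
  · have h : ∀ k, harmA N i j k * u k = ((N : ℝ) + 2)⁻¹ *
        (u k + (if k = i then u k else 0) + (if j = k then u k else 0)) := by
      intro k
      simp only [harmA, Matrix.of_apply, if_neg hj]
      by_cases hk : k = i
      · subst hk
        simp [hj]
        ring
      · by_cases hjk : j = k
        · simp [hjk, hk]
          ring
        · simp [hjk, hk]
    simp only [h, ← Finset.mul_sum, Finset.sum_add_distrib]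
    simp [hj]
    left
    ring

theorem quotient_map_spectrum (N : ℕ) (hN : 3 ≤ N) (i : Fin N) :
    ∃ h : (Submodule.span ℝ {(fun _ => 1 : Fin N → ℝ)}) ≤
        (Submodule.span ℝ {(fun _ => 1 : Fin N → ℝ)}).comap (Matrix.mulVecLin (harmA N i)),
      ∃ B : Module.End ℝ ((Fin N → ℝ) ⧸ Submodule.span ℝ {(fun _ => 1 : Fin N → ℝ)}),
        (Submodule.mapQ _ _ (Matrix.mulVecLin (harmA N i)) h) ∘ₗ B = LinearMap.id ∧
        B ∘ₗ (Submodule.mapQ _ _ (Matrix.mulVecLin (harmA N i)) h) = LinearMap.id ∧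
        spectrum ℝ B = {((N : ℝ) + 2) / N, (N : ℝ) + 2} ∧
        Module.finrank ℝ (Module.End.eigenspace B (((N : ℝ) + 2) / N)) = 1 ∧
        Module.finrank ℝ (Module.End.eigenspace B ((N : ℝ) + 2)) = N - 2 := by
  set W := Submodule.span ℝ {(fun _ => 1 : Fin N → ℝ)} with hW
  have h1W : (fun _ => 1 : Fin N → ℝ) ∈ W := Submodule.mem_span_singleton_self _
  have hN3 : (3 : ℝ) ≤ N := by exact_mod_cast hN
  let g : (Fin N → ℝ) →ₗ[ℝ] ℝ := (N : ℝ) • LinearMap.proj i - ∑ k, LinearMap.proj k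
  have hg : ∀ u, g u = (N : ℝ) * u i - ∑ k, u k := by
    intro u
    simp [g]
  have hgW : W ≤ LinearMap.ker g := by
    rw [hW, Submodule.span_singleton_le_iff_mem, LinearMap.mem_ker, hg]
    simp
  have h : W ≤ W.comap (Matrix.mulVecLin (harmA N i)) := by
    rw [hW, Submodule.span_singleton_le_iff_mem, Submodule.mem_comap, harmA_mulVec, ← hW]
    apply W.smul_mem
    refine W.add_mem (W.add_mem h1W ?_) (W.smul_mem _ h1W)
    simp
  refine ⟨h, ?_⟩
  refine rank_one_spectrum N hN ?_ (W.liftQ g hgW) (W.mkQ (Pi.single i 1)) ?_ _ ?_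
  · have h2 := W.finrank_quotient_add_finrank
    have h3 : Module.finrank ℝ W = 1 := by
      apply finrank_span_singleton
      intro h0
      simpa using congrFun h0 i
    rw [h3, Module.finrank_fin_fun] at h2
    omega
  · simp [hg]
  · intro x
    obtain ⟨u, rfl⟩ := W.mkQ_surjective x
    have h5 : W.mkQ (fun _ => 1) = 0 := by simpa using h1W
    rw [Submodule.mkQ_apply, Submodule.mapQ_apply, Submodule.liftQ_apply, hg, harmA_mulVec,
      ← Submodule.mkQ_apply, ← Submodule.mkQ_apply]
    simp only [map_smul, map_add, h5, smul_zero, add_zero]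
end

section
/- For each i ∈ {0,…,N−1}, the matrix A_i is invertible and satisfies E(A_i^{−1} v) ≤ (N+2)² E(v) for every v ∈ ℝ^N, and moreover there exists v ∈ ℝ^N with E(v) ≠ 0 and E(A_i^{−1} v) = (N+2)² E(v); that is, the E-operator norm of A_i^{−1} equals exactly N+2. -/
open Matrix Filter

lemma energy_eq_aux (N : ℕ) (v : Fin N → ℝ) :
    energy N v v = N * (∑ k, v k ^ 2) - (∑ k, v k) ^ 2 := by
  have h1 : energy N v v = ∑ k : Fin N, ∑ l : Fin N,
      if l < k then (v k - v l) * (v k - v l) else 0 := by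
    unfold energy
    rw [Finset.sum_comm]
    refine Finset.sum_congr rfl fun k _ => Finset.sum_congr rfl fun l _ => ?_
    split_ifs <;> ring
  have h2 : energy N v v + energy N v v = ∑ k : Fin N, ∑ l : Fin N, (v k - v l) ^ 2 := by
    nth_rewrite 2 [h1]
    unfold energy
    rw [← Finset.sum_add_distrib]
    refine Finset.sum_congr rfl fun k _ => ?_
    rw [← Finset.sum_add_distrib]
    refine Finset.sum_congr rfl fun l _ => ?_
    rcases lt_trichotomy k l with h | h | h
    · simp [h, h.not_gt]; ring
    · simp [h]
    · simp [h, h.not_gt]; ring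
  have h3 : ∑ k : Fin N, ∑ l : Fin N, (v k - v l) ^ 2
      = 2 * (N * (∑ k, v k ^ 2) - (∑ k, v k) ^ 2) := by
    simp only [sub_sq, Finset.sum_add_distrib, Finset.sum_sub_distrib, Finset.sum_const,
      Finset.card_univ, Fintype.card_fin, nsmul_eq_mul, ← Finset.mul_sum, ← Finset.sum_mul]
    ring
  linarith

lemma harmA_mulVec_aux (N : ℕ) (i : Fin N) (u : Fin N → ℝ) (j : Fin N) :
    ((N : ℝ) + 2) * (harmA N i).mulVec u j =
      u j + (u i + ∑ k, u k) + if j = i then N * u i - ∑ k, u k else 0 := by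
  have hN : (N : ℝ) + 2 ≠ 0 := by positivity
  by_cases hj : j = i
  · subst hj
    simp [harmA, Matrix.mulVec, dotProduct]
    ring
  · have : ∀ k, ((N : ℝ) + 2) * (harmA N i j k * u k)
        = u k + (if j = k then u k else 0) + (if k = i then u k else 0) := by
      intro k
      by_cases hk : k = i
      · subst hk
        simp [harmA, hj]
        field_simp
        ring
      · by_cases hjk : j = k
        · subst hjk
          simp [harmA, hj]
          field_simp
        · simp [harmA, hj, hk, hjk]
          field_simp
    simp only [Matrix.mulVec, dotProduct, Finset.mul_sum, this, hj, Finset.sum_add_distrib]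
    simp
    ring

lemma energy_harmA_aux (N : ℕ) (i : Fin N) (u : Fin N → ℝ) :
    ((N : ℝ) + 2) ^ 2 * energy N ((harmA N i).mulVec u) ((harmA N i).mulVec u) =
      energy N u u + (N + 1) * (N * u i - ∑ k, u k) ^ 2 := by
  rw [energy_eq_aux, energy_eq_aux]
  set w := (harmA N i).mulVec u with hw
  have e1 : ((N : ℝ) + 2) * ∑ k, w k =
      (∑ k, u k) + N * (u i + ∑ k, u k) + (N * u i - ∑ k, u k) := by
    rw [Finset.mul_sum, Finset.sum_congr rfl fun k _ => harmA_mulVec_aux N i u k]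
    simp [Finset.sum_add_distrib]
    ring
  have e2 : ((N : ℝ) + 2) ^ 2 * ∑ k, w k ^ 2 =
      (∑ k, u k ^ 2) + 2 * (∑ k, u k) * (u i + ∑ k, u k) + N * (u i + ∑ k, u k) ^ 2
       + 2 * (u i + (u i + ∑ k, u k)) * (N * u i - ∑ k, u k) + (N * u i - ∑ k, u k) ^ 2 := by
    set S := ∑ k, u k with hS
    have : ∀ k, ((N : ℝ) + 2) ^ 2 * w k ^ 2 = u k ^ 2 + 2 * (u i + S) * u k + (u i + S) ^ 2
        + if k = i then 2 * (u i + (u i + S)) * (N * u i - S) + (N * u i - S) ^ 2 else 0 := by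
      intro k
      rw [← mul_pow, harmA_mulVec_aux N i u k]
      split_ifs with h
      · subst h; ring
      · ring
    rw [Finset.mul_sum, Finset.sum_congr rfl fun k _ => this k]
    simp only [Finset.sum_add_distrib, ← Finset.mul_sum, ← hS]
    simp
    ring
  have : ((N : ℝ) + 2) ^ 2 * (N * (∑ k, w k ^ 2) - (∑ k, w k) ^ 2)
     = N * (((N : ℝ) + 2) ^ 2 * ∑ k, w k ^ 2) - (((N : ℝ) + 2) * ∑ k, w k) ^ 2 := by ring
  rw [this, e1, e2]
  ring

lemma isUnit_harmA_aux (N : ℕ) (i : Fin N) : IsUnit (harmA N i) := by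
  rw [← Matrix.mulVec_injective_iff_isUnit]
  have hN : (N : ℝ) + 2 ≠ 0 := by positivity
  have hN0 : (N : ℝ) ≠ 0 := by
    have := i.pos
    positivity
  refine (injective_iff_map_eq_zero (Matrix.mulVecLin (harmA N i))).2 fun u hu => ?_
  rw [Matrix.mulVecLin_apply] at hu
  have key : ∀ j, u j + (u i + ∑ k, u k) + (if j = i then N * u i - ∑ k, u k else 0) = 0 := by
    intro j
    rw [← harmA_mulVec_aux, hu]
    simp
  have hi : u i = 0 := by
    have := key i
    simp only [if_true] at this
    have h : ((N : ℝ) + 2) * u i = 0 := by linarith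
    simpa [hN] using h
  have hs : ∑ k, u k = 0 := by
    have h := Finset.sum_congr rfl fun j (_ : j ∈ Finset.univ) => key j
    simp [Finset.sum_add_distrib, hi] at h
    exact h.resolve_left fun h0 => hN0 (by simp [h0])
  funext j
  have := key j
  simpa [hi, hs] using this

theorem energy_opNorm_of_inv_harmA (N : ℕ) (hN : 3 ≤ N) (i : Fin N) :
    IsUnit (harmA N i) ∧
    (∀ v : Fin N → ℝ,
      energy N ((harmA N i)⁻¹.mulVec v) ((harmA N i)⁻¹.mulVec v) ≤
        ((N : ℝ) + 2) ^ 2 * energy N v v) ∧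
    ∃ v : Fin N → ℝ, energy N v v ≠ 0 ∧
      energy N ((harmA N i)⁻¹.mulVec v) ((harmA N i)⁻¹.mulVec v) =
        ((N : ℝ) + 2) ^ 2 * energy N v v := by
  have hu := isUnit_harmA_aux N i
  have hdet : IsUnit (harmA N i).det := (Matrix.isUnit_iff_isUnit_det _).1 hu
  refine ⟨hu, fun v => ?_, ?_⟩
  · have h := energy_harmA_aux N i ((harmA N i)⁻¹.mulVec v)
    rw [Matrix.mulVec_mulVec, Matrix.mul_nonsing_inv _ hdet, Matrix.one_mulVec] at h
    rw [h]
    have : (0 : ℝ) ≤ (N + 1) * (N * (harmA N i)⁻¹.mulVec v i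
      - ∑ k, (harmA N i)⁻¹.mulVec v k) ^ 2 := by positivity
    linarith
  · obtain ⟨a, ha⟩ : ∃ a : Fin N, a ≠ i := by
      have : Nontrivial (Fin N) := Fin.nontrivial_iff_two_le.2 (by omega)
      exact exists_ne i
    obtain ⟨b, hb⟩ : ∃ b : Fin N, b ∉ ({i, a} : Finset (Fin N)) := by
      by_contra! hcon
      have h1 : (Finset.univ : Finset (Fin N)).card ≤ ({i, a} : Finset (Fin N)).card :=
        Finset.card_le_card fun x _ => hcon x
      have h2 := Finset.card_le_two (a := i) (b := a)
      simp only [Finset.card_univ, Fintype.card_fin] at h1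
      omega
    simp only [Finset.mem_insert, Finset.mem_singleton, not_or] at hb
    obtain ⟨hbi, hba⟩ := hb
    let u : Fin N → ℝ := fun k => (if k = a then 1 else 0) - (if k = b then 1 else 0)
    have hui : u i = 0 := by simp [u, ha.symm, Ne.symm hbi]
    have hus : ∑ k, u k = 0 := by simp [u]
    have hE : energy N u u ≠ 0 := by
      rw [energy_eq_aux, hus]
      have hq : 0 < ∑ k, u k ^ 2 :=
        Finset.sum_pos' (fun k _ => sq_nonneg _) ⟨a, Finset.mem_univ _, by
          simp [u, Ne.symm hba]⟩
      have hN0 : (0 : ℝ) < N := by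
        have := i.pos
        exact_mod_cast this
      have := mul_pos hN0 hq
      intro h
      linarith
    have h := energy_harmA_aux N i u
    rw [hui, hus] at h
    refine ⟨(harmA N i).mulVec u, ?_, ?_⟩
    · intro h0
      rw [h0] at h
      apply hE
      linarith
    · rw [Matrix.mulVec_mulVec, Matrix.nonsing_inv_mul _ hdet, Matrix.one_mulVec, h]
      ring
end

section
/- If w : {1,…,N−1} → {0,…,N−1} is injective (i.e., w_1…w_{N−1} is an (N−1)-block) and v ∈ ℝ^N satisfies A_{w_j} v = (1/(N+2)) v for every j ∈ {1,…,N−1}, then v = 0. In other words, the harmonic extension matrices indexed by the letters of an (N−1)-block have no common nonzero eigenvector with eigenvalue 1/(N+2). -/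
open Matrix Filter

theorem no_common_small_eigenvector_of_block (N : ℕ) (hN : 3 ≤ N)
    (w : Fin (N - 1) → Fin N) (hw : Function.Injective w) (v : Fin N → ℝ)
    (hv : ∀ j : Fin (N - 1), (harmA N (w j)).mulVec v = (1 / ((N : ℝ) + 2)) • v) :
    v = 0 := by
  have hN0 : (0 : ℝ) < (N : ℝ) + 2 := by positivity
  have hN3 : (3 : ℝ) ≤ (N : ℝ) := by exact_mod_cast hN
  have hz : ∀ j, v (w j) = 0 := by
    intro j
    have h := congrFun (hv j) (w j)
    simp only [Matrix.mulVec, dotProduct, harmA, Matrix.of_apply, if_true, Pi.smul_apply,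
      smul_eq_mul, ite_mul, one_mul, zero_mul, Finset.sum_ite_eq', Finset.mem_univ,
      Finset.sum_ite_eq] at h
    field_simp at h
    nlinarith
  funext m
  by_cases hm : ∃ j, w j = m
  · obtain ⟨j, rfl⟩ := hm
    exact hz j
  · have hnot : m ∉ Finset.univ.image w := by simpa using hm
    have hall : insert m (Finset.univ.image w) = Finset.univ := by
      apply Finset.eq_univ_of_card
      rw [Finset.card_insert_of_notMem hnot, Finset.card_image_of_injective _ hw]
      simp
      omega
    have hother : ∀ k, k ≠ m → v k = 0 := by
      intro k hk
      have h : k ∈ insert m (Finset.univ.image w) := by rw [hall]; simp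
      simp only [Finset.mem_insert, Finset.mem_image, Finset.mem_univ, true_and] at h
      rcases h with h | ⟨j, rfl⟩
      · exact absurd h hk
      · exact hz j
    let j0 : Fin (N - 1) := ⟨0, by omega⟩
    have hne : m ≠ w j0 := fun h => hm ⟨j0, h.symm⟩
    have h := congrFun (hv j0) m
    simp only [Matrix.mulVec, dotProduct] at h
    rw [Finset.sum_eq_single m (fun k _ hk => by rw [hother k hk, mul_zero])
      (fun h => absurd (Finset.mem_univ m) h)] at h
    simp only [harmA, Matrix.of_apply, if_neg hne, if_true, Pi.smul_apply, smul_eq_mul] at h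
    field_simp at h
    simp only [Pi.zero_apply]
    linarith
end

section
/- There exists β with 0 < β < 1 such that for every injective map w : {1,…,N−1} → {0,…,N−1} (i.e., every (N−1)-block w_1…w_{N−1}) and every v ∈ ℝ^N, E(A_{w_{N−1}}^{−1} A_{w_{N−2}}^{−1} ⋯ A_{w_1}^{−1} v) ≤ ((N+2)β)^{2(N−1)} E(v); equivalently, the E-operator norm of the product A_{w_{N−1}}^{−1}⋯A_{w_1}^{−1} is at most ((N+2)β)^{N−1} for a uniform β < 1. -/
open Matrix Filter

/-- Product `A_{w_m}⁻¹ ⋯ A_{w_1}⁻¹` of inverse harmonic extension matrices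
along a finite word `w = w_1 ⋯ w_m` (zero-indexed as `w 0, …, w (m-1)`). -/
noncomputable def wordProdInv (N : ℕ) {m : ℕ} (w : Fin m → Fin N) :
    Matrix (Fin N) (Fin N) ℝ :=
  ((List.ofFn fun j => (harmA N (w j))⁻¹).reverse).prod

/-- Product `A_{ω_n}⁻¹ ⋯ A_{ω_1}⁻¹` along the first `n` letters of the infinite
word `ω = ω_1 ω_2 ⋯` (zero-indexed, so `ω_1 = ω 0`). -/
noncomputable def prefixProdInv (N : ℕ) (ω : ℕ → Fin N) (n : ℕ) :
    Matrix (Fin N) (Fin N) ℝ :=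
  wordProdInv N fun j : Fin n => ω j

open scoped Classical in
/-- Block counting function `C_N(ω,n)`: the number of positions `i` with
`i + (N-2) ≤ n` (one-indexed) at which the `N-1` letters `ω_i, …, ω_{i+N-2}`
are pairwise distinct.  Here `ω` is zero-indexed, so `ω_1 = ω 0`. -/
noncomputable def blockCount (N : ℕ) (ω : ℕ → Fin N) (n : ℕ) : ℕ :=
  ((Finset.range n).filter fun i =>
    i + (N - 2) < n ∧ Function.Injective fun j : Fin (N - 1) => ω (i + j)).card

/-- Explicit formula for the inverse step. -/
noncomputable def stepB (N : ℕ) (i : Fin N) (v : Fin N → ℝ) : Fin N → ℝ := fun j =>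
  (v i - (N + 2) * v i - (N + 2) * (∑ k, v k - N * v i) / N) + (N + 2) * v j
    + if j = i then (N + 2) * (∑ k, v k - N * v i) / N else 0

lemma harmA_mulVec_s6 (N : ℕ) (i : Fin N) (u : Fin N → ℝ) (j : Fin N) :
    (harmA N i).mulVec u j =
      if j = i then u i else (u i + ∑ k, u k + u j) / (N + 2) := by
  by_cases h : j = i
  · subst h
    simp [Matrix.mulVec, dotProduct, harmA]
  · have h1 : ∀ k, harmA N i j k * u k =
        (u k + (if j = k then u k else 0) + (if k = i then u k else 0)) / (N + 2) := by
      intro k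
      simp only [harmA, Matrix.of_apply, h, if_false]
      by_cases hk : k = i
      · subst hk
        simp [h]; ring
      · by_cases hj : j = k
        · simp [hk, hj]; ring
        · simp [hk, hj]; ring
    simp only [Matrix.mulVec, dotProduct, h1, h, if_false]
    rw [← Finset.sum_div, Finset.sum_add_distrib, Finset.sum_add_distrib]
    simp
    ring

lemma sum_stepB (N : ℕ) (hN : 3 ≤ N) (i : Fin N) (v : Fin N → ℝ) :
    ∑ k, stepB N i v k = N * v i + (N + 2) * (∑ k, v k - N * v i) / N := by
  have : (N : ℝ) ≠ 0 := by positivity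
  simp only [stepB, Finset.sum_add_distrib, ← Finset.mul_sum, Finset.sum_const,
    Finset.sum_ite_eq', Finset.mem_univ, if_true, Finset.card_univ, Fintype.card_fin, nsmul_eq_mul]
  field_simp
  ring

lemma inv_mulVec (N : ℕ) (hN : 3 ≤ N) (i : Fin N) (v : Fin N → ℝ) :
    (harmA N i)⁻¹.mulVec v = stepB N i v := by
  have h0 : (N : ℝ) ≠ 0 := by positivity
  have h2 : (N : ℝ) + 2 ≠ 0 := by positivity
  have key : ∀ v, (harmA N i).mulVec (stepB N i v) = v := by
    intro v
    ext j
    rw [harmA_mulVec_s6, sum_stepB N hN]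
    by_cases h : j = i
    · subst h
      simp [stepB]
      ring
    · simp only [h, if_false, stepB, if_true]
      field_simp
      ring
  have hu : IsUnit (harmA N i) := by
    rw [← Matrix.mulVec_surjective_iff_isUnit]
    exact fun v => ⟨_, key v⟩
  have hd := (Matrix.isUnit_iff_isUnit_det _).1 hu
  conv_lhs => rw [← key v]
  rw [Matrix.mulVec_mulVec, Matrix.nonsing_inv_mul _ hd, Matrix.one_mulVec]

lemma energy_eq (N : ℕ) (v : Fin N → ℝ) :
    energy N v v = N * ∑ k, v k ^ 2 - (∑ k, v k) ^ 2 := by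
  have h1 : energy N v v + energy N v v = ∑ k, ∑ l, (v k - v l) ^ 2 := by
    conv_lhs => 
      arg 2
      unfold energy
      rw [Finset.sum_comm]
    unfold energy
    rw [← Finset.sum_add_distrib]
    refine Finset.sum_congr rfl fun k _ => ?_
    rw [← Finset.sum_add_distrib]
    refine Finset.sum_congr rfl fun l _ => ?_
    rcases lt_trichotomy k l with h | h | h
    · simp [h, h.not_gt]; ring
    · simp [h]
    · simp [h, h.not_gt]; ring
  have h2 : ∑ k, ∑ l, (v k - v l) ^ 2 = 2 * (N * ∑ k, v k ^ 2 - (∑ k, v k) ^ 2) := by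
    have : ∀ k l, (v k - v l) ^ 2 = v k ^ 2 + v l ^ 2 - 2 * (v k * v l) := by intros; ring
    simp only [this, Finset.sum_sub_distrib, Finset.sum_add_distrib, ← Finset.mul_sum,
      Finset.sum_const, Finset.card_univ, Fintype.card_fin, nsmul_eq_mul, ← Finset.sum_mul]
    ring
  linarith

lemma energy_stepB (N : ℕ) (hN : 3 ≤ N) (i : Fin N) (v : Fin N → ℝ) :
    energy N (stepB N i v) (stepB N i v) = ((N : ℝ) + 2) ^ 2 *
      (energy N v v - (1 / N + 1 / N ^ 2) * (∑ k, v k - N * v i) ^ 2) := by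
  have h0 : (N : ℝ) ≠ 0 := by positivity
  rw [energy_eq, energy_eq, sum_stepB N hN]
  have hs : ∑ k, stepB N i v k ^ 2 =
      ∑ k, ((v i - (N + 2) * v i - (N + 2) * (∑ k, v k - N * v i) / N) ^ 2
        + 2 * (v i - (N + 2) * v i - (N + 2) * (∑ k, v k - N * v i) / N) * (N + 2) * v k
        + (N + 2) ^ 2 * v k ^ 2
        + if k = i then ((N + 2) * (∑ k, v k - N * v i) / N) ^ 2
          + 2 * ((N + 2) * (∑ k, v k - N * v i) / N) * 
          ((v i - (N + 2) * v i - (N + 2) * (∑ k, v k - N * v i) / N) + (N + 2) * v i) else 0) := by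
    refine Finset.sum_congr rfl fun k _ => ?_
    simp only [stepB]
    by_cases h : k = i
    · subst h; simp only [if_true]; ring
    · simp only [h, if_false]; ring
  rw [hs]
  simp only [Finset.sum_add_distrib, ← Finset.mul_sum, Finset.sum_const,
    Finset.sum_ite_eq', Finset.mem_univ, if_true, Finset.card_univ, Fintype.card_fin, nsmul_eq_mul]
  field_simp
  ring

lemma word_succ (N : ℕ) (hN : 3 ≤ N) {m : ℕ} (w : Fin (m + 1) → Fin N) (v : Fin N → ℝ) :
    (wordProdInv N w).mulVec v =
      (wordProdInv N (fun j => w j.succ)).mulVec (stepB N (w 0) v) := by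
  rw [← inv_mulVec N hN, Matrix.mulVec_mulVec]
  simp [wordProdInv, List.ofFn_succ]

lemma word_shift (N : ℕ) (hN : 3 ≤ N) (m : ℕ) : ∀ (w : Fin m → Fin N) (v : Fin N → ℝ) (c : ℝ),
    (wordProdInv N w).mulVec (fun k => v k + c) = fun k => (wordProdInv N w).mulVec v k + c := by
  have h0 : (N : ℝ) ≠ 0 := by positivity
  induction m with
  | zero => intro w v c; simp [wordProdInv]
  | succ m ih =>
    intro w v c
    rw [word_succ N hN, word_succ N hN, ← ih]
    congr 1
    ext j
    simp only [stepB, Finset.sum_add_distrib, Finset.sum_const, Finset.card_univ,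
      Fintype.card_fin, nsmul_eq_mul]
    split_ifs <;> field_simp <;> ring

lemma word_le (N : ℕ) (hN : 3 ≤ N) (m : ℕ) : ∀ (w : Fin m → Fin N) (v : Fin N → ℝ),
    energy N ((wordProdInv N w).mulVec v) ((wordProdInv N w).mulVec v) ≤
      ((N : ℝ) + 2) ^ (2 * m) * energy N v v ∧
    (energy N ((wordProdInv N w).mulVec v) ((wordProdInv N w).mulVec v) =
      ((N : ℝ) + 2) ^ (2 * m) * energy N v v → ∀ j, ∑ k, v k - N * v (w j) = 0) := by
  have h0 : (N : ℝ) ≠ 0 := by positivity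
  induction m with
  | zero => intro w v; simp [wordProdInv]
  | succ m ih =>
    intro w v
    rw [word_succ N hN]
    obtain ⟨h1, h2⟩ := ih (fun j => w j.succ) (stepB N (w 0) v)
    have hB := energy_stepB N hN (w 0) v
    have hs : 0 ≤ (1 / (N : ℝ) + 1 / N ^ 2) * (∑ k, v k - N * v (w 0)) ^ 2 := by positivity
    have hp : (0 : ℝ) < ((N : ℝ) + 2) ^ (2 * (m + 1)) := by positivity
    have e1 : ((N : ℝ) + 2) ^ (2 * m) * energy N (stepB N (w 0) v) (stepB N (w 0) v) =
        ((N : ℝ) + 2) ^ (2 * (m + 1)) * energy N v v - ((N : ℝ) + 2) ^ (2 * (m + 1)) *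
        ((1 / (N : ℝ) + 1 / N ^ 2) * (∑ k, v k - N * v (w 0)) ^ 2) := by
      rw [hB]; ring
    have hps := mul_nonneg hp.le hs
    refine ⟨by linarith, fun heq => ?_⟩
    have hz : ((N : ℝ) + 2) ^ (2 * (m + 1)) *
        ((1 / (N : ℝ) + 1 / N ^ 2) * (∑ k, v k - N * v (w 0)) ^ 2) = 0 := by linarith
    have hc : (1 / (N : ℝ) + 1 / N ^ 2) ≠ 0 := by positivity
    have hz' : ∑ k, v k - N * v (w 0) = 0 := by
      rcases mul_eq_zero.1 hz with h | h
      · exact absurd h hp.ne'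
      · rcases mul_eq_zero.1 h with h | h
        · exact absurd h hc
        · exact pow_eq_zero_iff (two_ne_zero) |>.1 h
    have h3 := h2 (by linarith)
    intro j
    refine Fin.cases hz' (fun j => ?_) j
    have h4 := h3 j
    rw [sum_stepB N hN] at h4
    simp only [stepB, hz'] at h4
    have h5 : ((N : ℝ) + 2) * (∑ k, v k - N * v (w j.succ)) = 0 := by
      simp only [mul_zero, zero_div, ite_self] at h4
      linear_combination h4 + ((N : ℝ) + 2) * hz'
    exact (mul_eq_zero.1 h5).resolve_left (by positivity)

lemma energy_zero_of_block (N : ℕ) (hN : 3 ≤ N) (w : Fin (N - 1) → Fin N)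
    (hw : Function.Injective w) (v : Fin N → ℝ)
    (h : ∀ j, ∑ k, v k - N * v (w j) = 0) : energy N v v = 0 := by
  have h0 : (N : ℝ) ≠ 0 := by positivity
  have hsum : ∑ l, (∑ k, v k - N * v l) = 0 := by
    simp [Finset.sum_sub_distrib, ← Finset.mul_sum]
  have hall : ∀ k, ∑ l, v l - N * v k = 0 := by
    intro k
    by_cases hk : k ∈ Set.range w
    · obtain ⟨j, rfl⟩ := hk; exact h j
    · rw [← hsum]
      symm
      apply Finset.sum_eq_single_of_mem k (Finset.mem_univ _)
      intro l _ hl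
      by_cases hl' : l ∈ Set.range w
      · obtain ⟨j, rfl⟩ := hl'; exact h j
      · exfalso
        have hc : (insert k (insert l (Finset.univ.image w))).card ≤ N := by
          simpa using Finset.card_le_univ (insert k (insert l (Finset.univ.image w)))
        rw [Finset.card_insert_of_notMem, Finset.card_insert_of_notMem,
          Finset.card_image_of_injective _ hw] at hc
        · simp at hc; omega
        · simpa using hl'
        · simp only [Finset.mem_insert, Finset.mem_image, Finset.mem_univ, true_and, not_or]
          exact ⟨hl.symm, by simpa using hk⟩
  have hv : ∀ k, v k = (∑ l, v l) / N := by
    intro k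
    have := hall k
    field_simp
    linarith
  rw [energy_eq]
  set S := ∑ l, v l
  simp only [hv, Finset.sum_const, Finset.card_univ, Fintype.card_fin, nsmul_eq_mul]
  field_simp
  ring

lemma energy_smul (N : ℕ) (c : ℝ) (v : Fin N → ℝ) :
    energy N (c • v) (c • v) = c ^ 2 * energy N v v := by
  simp only [energy_eq, Pi.smul_apply, smul_eq_mul, mul_pow, ← Finset.mul_sum]
  ring

lemma energy_shift (N : ℕ) (c : ℝ) (v : Fin N → ℝ) :
    energy N (fun k => v k + c) (fun k => v k + c) = energy N v v := by
  simp [energy]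

lemma block_gamma (N : ℕ) (hN : 3 ≤ N) (w : Fin (N - 1) → Fin N)
    (hw : Function.Injective w) : ∃ γ : ℝ, γ < 1 ∧ ∀ v : Fin N → ℝ,
      energy N ((wordProdInv N w).mulVec v) ((wordProdInv N w).mulVec v) ≤
        γ * (((N : ℝ) + 2) ^ (2 * (N - 1)) * energy N v v) := by
  have h0 : (0 : ℝ) < N := by positivity
  set C : ℝ := ((N : ℝ) + 2) ^ (2 * (N - 1)) with hC
  have hCp : 0 < C := by positivity
  have hpos : ∀ v : Fin N → ℝ, ∑ k, v k = 0 → v ≠ 0 → 0 < energy N v v := by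
    intro v hs hv
    rw [energy_eq, hs]
    obtain ⟨k, hk⟩ := Function.ne_iff.1 hv
    have : 0 < ∑ k, v k ^ 2 := Finset.sum_pos' (fun _ _ => sq_nonneg _)
      ⟨k, Finset.mem_univ _, by have : v k ≠ 0 := hk
                                positivity⟩
    nlinarith [mul_pos h0 this]
  have hcont : Continuous fun v : Fin N → ℝ => energy N v v := by
    simp only [energy_eq]; fun_prop
  have hcontP : Continuous fun v : Fin N → ℝ =>
      energy N ((wordProdInv N w).mulVec v) ((wordProdInv N w).mulVec v) :=
    hcont.comp (by fun_prop : Continuous fun v : Fin N → ℝ => (wordProdInv N w).mulVec v)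
  let K : Set (Fin N → ℝ) := Metric.sphere 0 1 ∩ {v | ∑ k, v k = 0}
  have hK : IsCompact K := (isCompact_sphere 0 1).inter_right
    (isClosed_eq (by fun_prop) continuous_const)
  have hKpos : ∀ v ∈ K, 0 < energy N v v := by
    rintro v ⟨h1, h2⟩
    refine hpos v h2 ?_
    rintro rfl
    simp at h1
  have hex : ∃ γ : ℝ, γ < 1 ∧ ∀ v ∈ K,
      energy N ((wordProdInv N w).mulVec v) ((wordProdInv N w).mulVec v) ≤
        γ * (C * energy N v v) := by
    rcases K.eq_empty_or_nonempty with he | hne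
    · exact ⟨0, by norm_num, by simp [he]⟩
    · obtain ⟨x, hx, hmax⟩ := hK.exists_isMaxOn hne
        (f := fun v => energy N ((wordProdInv N w).mulVec v) ((wordProdInv N w).mulVec v) /
          (C * energy N v v))
        (hcontP.continuousOn.div (continuous_const.mul hcont).continuousOn fun v hv => (mul_pos hCp (hKpos v hv)).ne')
      refine ⟨_, ?_, fun v hv => (div_le_iff₀ (mul_pos hCp (hKpos v hv))).1 (hmax hv)⟩
      show _ / _ < _
      rw [div_lt_one (mul_pos hCp (hKpos x hx))]
      obtain ⟨h1, h2⟩ := word_le N hN _ w x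
      refine lt_of_le_of_ne h1 fun h => ?_
      exact (hKpos x hx).ne' (energy_zero_of_block N hN w hw x (h2 h))
  obtain ⟨γ, hγ, hle⟩ := hex
  refine ⟨γ, hγ, fun v => ?_⟩
  have hs0 : ∑ k, (v k + -(∑ l, v l) / N) = 0 := by
    simp only [Finset.sum_add_distrib, Finset.sum_const, Finset.card_univ,
      Fintype.card_fin, nsmul_eq_mul]
    field_simp
    ring
  rw [← energy_shift N (-(∑ l, v l) / N) v,
    ← energy_shift N (-(∑ l, v l) / N) ((wordProdInv N w).mulVec v), ← word_shift N hN]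
  generalize (fun k => v k + -(∑ l, v l) / N) = u at *
  by_cases hu : u = 0
  · subst hu
    simp [energy]
  · have hn : 0 < ‖u‖ := norm_pos_iff.2 hu
    have := hle (‖u‖⁻¹ • u) ⟨by simp [norm_smul, hn.ne'], by
      simp only [Set.mem_ofPred_eq, Pi.smul_apply, smul_eq_mul, ← Finset.mul_sum, hs0, mul_zero]⟩
    rw [Matrix.mulVec_smul, energy_smul, energy_smul] at this
    have hp : 0 < ‖u‖⁻¹ ^ 2 := by positivity
    refine le_of_mul_le_mul_left ?_ hp
    linarith

theorem exists_beta_block_energy_contraction (N : ℕ) (hN : 3 ≤ N) :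
    ∃ β : ℝ, 0 < β ∧ β < 1 ∧
      ∀ w : Fin (N - 1) → Fin N, Function.Injective w →
        ∀ v : Fin N → ℝ,
          energy N ((wordProdInv N w).mulVec v) ((wordProdInv N w).mulVec v) ≤
            (((N : ℝ) + 2) * β) ^ (2 * (N - 1)) * energy N v v := by
  have hnn : ∀ v : Fin N → ℝ, 0 ≤ energy N v v := by
    intro v
    refine Finset.sum_nonneg fun k _ => Finset.sum_nonneg fun l _ => ?_
    split_ifs
    · exact mul_self_nonneg _
    · exact le_rfl
  have h1 : ∀ w : Fin (N - 1) → Fin N, ∃ γ : ℝ, γ < 1 ∧ (Function.Injective w → ∀ v : Fin N → ℝ,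
      energy N ((wordProdInv N w).mulVec v) ((wordProdInv N w).mulVec v) ≤
        γ * (((N : ℝ) + 2) ^ (2 * (N - 1)) * energy N v v)) := by
    intro w
    by_cases hw : Function.Injective w
    · obtain ⟨γ, h, h'⟩ := block_gamma N hN w hw
      exact ⟨γ, h, fun _ => h'⟩
    · exact ⟨0, by norm_num, fun h => absurd h hw⟩
  choose γ hγ1 hγ using h1
  obtain ⟨δ, hδ0, hδ1, hδ⟩ : ∃ δ : ℝ, 0 < δ ∧ δ < 1 ∧ ∀ w, γ w ≤ δ := by
    have : Nonempty (Fin N) := ⟨⟨0, by omega⟩⟩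
    obtain ⟨w0, h0⟩ := Finite.exists_max γ
    exact ⟨max (γ w0) (1 / 2), by positivity, by simp [hγ1]; norm_num,
      fun w => (h0 w).trans (le_max_left _ _)⟩
  have hne : 2 * (N - 1) ≠ 0 := by omega
  refine ⟨δ ^ (((2 * (N - 1) : ℕ) : ℝ)⁻¹), by positivity,
    Real.rpow_lt_one hδ0.le hδ1 (by positivity), fun w hw v => ?_⟩
  rw [mul_pow, Real.rpow_inv_natCast_pow hδ0.le hne]
  refine (hγ w hw v).trans ?_
  have : 0 ≤ ((N : ℝ) + 2) ^ (2 * (N - 1)) * energy N v v := mul_nonneg (by positivity) (hnn v)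
  nlinarith [mul_le_mul_of_nonneg_right (hδ w) this]
end

section
/- Suppose β ∈ (0,1) is such that for every injective map u : {1,…,N−1} → {0,…,N−1} and every v ∈ ℝ^N one has E(A_{u_{N−1}}^{−1}⋯A_{u_1}^{−1} v) ≤ ((N+2)β)^{2(N−1)} E(v). Then for every infinite word ω = ω_1ω_2… with letters in {0,…,N−1}, every n ≥ 1, and every v ∈ ℝ^N, E(A_{ω_n}^{−1} A_{ω_{n−1}}^{−1} ⋯ A_{ω_1}^{−1} v) ≤ ((N+2)^n β^{C_N(ω,n)})² E(v). -/
open Matrix Filter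

theorem energy_self_eq (N : ℕ) (u : Fin N → ℝ) (c : ℝ) :
    energy N u u = N * ∑ k, (u k - c) ^ 2 - (∑ k, (u k - c)) ^ 2 := by
  have h1 : (∑ k : Fin N, ∑ l : Fin N, (u k - u l) ^ 2) = 2 * energy N u u := by
    have h2 : (∑ k : Fin N, ∑ l : Fin N, (u k - u l) ^ 2) =
        energy N u u + ∑ k : Fin N, ∑ l : Fin N,
          if l < k then (u l - u k) * (u l - u k) else 0 := by
      unfold energy
      simp only [← Finset.sum_add_distrib]
      refine Finset.sum_congr rfl fun k _ => Finset.sum_congr rfl fun l _ => ?_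
      rcases lt_trichotomy k l with h | h | h
      · rw [if_pos h, if_neg h.asymm]; ring
      · subst h; simp
      · rw [if_neg h.asymm, if_pos h]; ring
    rw [h2, Finset.sum_comm]
    unfold energy
    ring
  have h3 : (∑ k : Fin N, ∑ l : Fin N, (u k - u l) ^ 2) =
      2 * (N * ∑ k, (u k - c) ^ 2 - (∑ k, (u k - c)) ^ 2) := by
    have : ∀ k l, (u k - u l) ^ 2 =
        (u k - c) ^ 2 + (u l - c) ^ 2 - 2 * ((u k - c) * (u l - c)) := by
      intro k l; ring
    simp only [this, Finset.sum_sub_distrib, Finset.sum_add_distrib, ← Finset.mul_sum,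
      ← Finset.sum_mul, Finset.sum_const, Finset.card_univ, Fintype.card_fin, nsmul_eq_mul]
    ring
  linarith

theorem energy_self_nonneg (N : ℕ) (u : Fin N → ℝ) : 0 ≤ energy N u u := by
  unfold energy
  refine Finset.sum_nonneg fun k _ => Finset.sum_nonneg fun l _ => ?_
  split_ifs
  · exact mul_self_nonneg _
  · exact le_rfl

theorem harmA_mulVec_sub (N : ℕ) (i : Fin N) (w : Fin N → ℝ) (j : Fin N) :
    ((N : ℝ) + 2) * ((harmA N i).mulVec w j - w i) =
      (w j - w i) + (if j = i then 0 else ∑ k, (w k - w i)) := by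
  have hM : ((N : ℝ) + 2) ≠ 0 := by positivity
  by_cases hj : j = i
  · subst hj
    simp [harmA, Matrix.mulVec, dotProduct]
  · have h : (harmA N i).mulVec w j = ∑ k, ((w k + (if k = i then w k else 0)
        + (if j = k then w k else 0)) / ((N : ℝ) + 2)) := by
      simp only [harmA, Matrix.mulVec, dotProduct, Matrix.of_apply, if_neg hj]
      refine Finset.sum_congr rfl fun k _ => ?_
      by_cases hk : k = i
      · subst hk; simp [hj]; ring
      · by_cases hjk : j = k
        · subst hjk; simp [hk]; ring
        · simp [hk, hjk]; ring
    rw [h, ← Finset.sum_div, if_neg hj]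
    simp only [Finset.sum_add_distrib, Finset.sum_sub_distrib, Finset.sum_ite_eq,
      Finset.sum_ite_eq', Finset.mem_univ, if_true, Finset.sum_const, Finset.card_univ,
      Fintype.card_fin, nsmul_eq_mul]
    field_simp
    ring

theorem energy_le_harmA (N : ℕ) (i : Fin N) (w : Fin N → ℝ) :
    energy N w w ≤ ((N : ℝ) + 2) ^ 2 *
      energy N ((harmA N i).mulVec w) ((harmA N i).mulVec w) := by
  rw [energy_self_eq N w (w i), energy_self_eq N _ (w i)]
  set X := ∑ k, (w k - w i) with hX
  have e1 : ((N : ℝ) + 2) * ∑ k, ((harmA N i).mulVec w k - w i) = N * X := by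
    rw [Finset.mul_sum]
    simp only [harmA_mulVec_sub]
    rw [Finset.sum_add_distrib, ← hX]
    have : ∀ j, (if j = i then 0 else X) = X - if j = i then X else 0 := by
      intro j; split_ifs <;> simp
    simp only [this, Finset.sum_sub_distrib, Finset.sum_ite_eq', Finset.mem_univ, if_true,
      Finset.sum_const, Finset.card_univ, Fintype.card_fin, nsmul_eq_mul]
    ring
  have e2 : ((N : ℝ) + 2) ^ 2 * ∑ k, ((harmA N i).mulVec w k - w i) ^ 2 =
      ∑ k, (w k - w i) ^ 2 + (N + 1) * X ^ 2 := by
    rw [Finset.mul_sum]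
    simp only [← mul_pow, harmA_mulVec_sub]
    rw [← hX]
    have : ∀ j, ((w j - w i) + (if j = i then 0 else X)) ^ 2 =
        (w j - w i) ^ 2 + 2 * X * (w j - w i) + X ^ 2 - if j = i then X ^ 2 else 0 := by
      intro j
      by_cases h : j = i
      · subst h; simp
      · simp [h]; ring
    simp only [this, Finset.sum_sub_distrib, Finset.sum_add_distrib, ← Finset.mul_sum,
      Finset.sum_ite_eq', Finset.mem_univ, if_true,
      Finset.sum_const, Finset.card_univ, Fintype.card_fin, nsmul_eq_mul]
    have hX2 : ∑ x, w x - N * w i = X := by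
      rw [hX, Finset.sum_sub_distrib]
      simp
    rw [hX2]
    ring
  have e3 : ((N : ℝ) + 2) ^ 2 * (N * ∑ k, ((harmA N i).mulVec w k - w i) ^ 2 -
      (∑ k, ((harmA N i).mulVec w k - w i)) ^ 2) =
      N * (((N : ℝ) + 2) ^ 2 * ∑ k, ((harmA N i).mulVec w k - w i) ^ 2) -
      (((N : ℝ) + 2) * ∑ k, ((harmA N i).mulVec w k - w i)) ^ 2 := by ring
  rw [e3, e1, e2]
  have : 0 ≤ ((N : ℝ) + 1) * X ^ 2 := by positivity
  nlinarith

theorem energy_harmA_inv_le (N : ℕ) (i : Fin N) (v : Fin N → ℝ) :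
    energy N ((harmA N i)⁻¹.mulVec v) ((harmA N i)⁻¹.mulVec v) ≤
      ((N : ℝ) + 2) ^ 2 * energy N v v := by
  by_cases h : IsUnit (harmA N i).det
  · have := energy_le_harmA N i ((harmA N i)⁻¹.mulVec v)
    rwa [Matrix.mulVec_mulVec, Matrix.mul_nonsing_inv _ h, Matrix.one_mulVec] at this
  · rw [Matrix.nonsing_inv_apply_not_isUnit _ h, Matrix.zero_mulVec]
    have h0 : energy N 0 0 = 0 := by simp [energy]
    rw [h0]
    exact mul_nonneg (by positivity) (energy_self_nonneg N v)

theorem prefixProdInv_add (N : ℕ) (ω : ℕ → Fin N) (k m : ℕ) :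
    prefixProdInv N ω (k + m) =
      wordProdInv N (fun j : Fin m => ω (k + j)) * prefixProdInv N ω k := by
  unfold prefixProdInv wordProdInv
  rw [List.ofFn_add, List.reverse_append, List.prod_append]
  rfl

theorem energy_prefix_succ (N : ℕ) (ω : ℕ → Fin N) (k : ℕ) (v : Fin N → ℝ) :
    energy N ((prefixProdInv N ω (k + 1)).mulVec v) ((prefixProdInv N ω (k + 1)).mulVec v) ≤
      ((N : ℝ) + 2) ^ 2 *
        energy N ((prefixProdInv N ω k).mulVec v) ((prefixProdInv N ω k).mulVec v) := by
  rw [prefixProdInv_add, ← Matrix.mulVec_mulVec]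
  have : wordProdInv N (fun j : Fin 1 => ω (k + j)) = (harmA N (ω k))⁻¹ := by
    simp [wordProdInv]
  rw [this]
  exact energy_harmA_inv_le N _ _

open scoped Classical in
/-- Good positions in a fixed residue class. -/
noncomputable def resBlocks (N : ℕ) (ω : ℕ → Fin N) (r n : ℕ) : Finset ℕ :=
  ((Finset.range n).filter fun i =>
    i + (N - 2) < n ∧ Function.Injective fun j : Fin (N - 1) => ω (i + j)).filter
      fun i => i % (N - 1) = r

theorem mem_resBlocks (N : ℕ) (ω : ℕ → Fin N) (r n i : ℕ) :
    i ∈ resBlocks N ω r n ↔ i + (N - 2) < n ∧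
      (Function.Injective fun j : Fin (N - 1) => ω (i + j)) ∧ i % (N - 1) = r := by
  simp only [resBlocks, Finset.mem_filter, Finset.mem_range]
  constructor
  · rintro ⟨⟨_, h1, h2⟩, h3⟩; exact ⟨h1, h2, h3⟩
  · rintro ⟨h1, h2, h3⟩; exact ⟨⟨by omega, h1, h2⟩, h3⟩

theorem residue_bound (N : ℕ) (hN : 3 ≤ N) (β : ℝ)
    (hβ0 : 0 < β) (hβ1 : β < 1)
    (hblock : ∀ u : Fin (N - 1) → Fin N, Function.Injective u →
      ∀ v : Fin N → ℝ,
        energy N ((wordProdInv N u).mulVec v) ((wordProdInv N u).mulVec v) ≤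
          (((N : ℝ) + 2) * β) ^ (2 * (N - 1)) * energy N v v)
    (ω : ℕ → Fin N) (v : Fin N → ℝ) (r n : ℕ) :
    energy N ((prefixProdInv N ω n).mulVec v) ((prefixProdInv N ω n).mulVec v) ≤
      ((N : ℝ) + 2) ^ (2 * n) * β ^ (2 * (N - 1) * (resBlocks N ω r n).card) *
        energy N v v := by
  have hE := energy_self_nonneg N v
  have hM : (0 : ℝ) < (N : ℝ) + 2 := by positivity
  induction n using Nat.strong_induction_on with
  | _ n ih =>
  rcases n with _ | n
  · have : resBlocks N ω r 0 = ∅ := by simp [resBlocks]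
    simp [this, prefixProdInv, wordProdInv]
  by_cases hg : ∃ k, k ∈ resBlocks N ω r (n + 1) ∧ k + (N - 1) = n + 1
  · obtain ⟨k, hk, hkn⟩ := hg
    rw [mem_resBlocks] at hk
    obtain ⟨_, hinj, hkr⟩ := hk
    have hsub : resBlocks N ω r (n + 1) ⊆ insert k (resBlocks N ω r k) := by
      intro i hi
      rw [mem_resBlocks] at hi
      obtain ⟨h1, h2, h3⟩ := hi
      rw [Finset.mem_insert, mem_resBlocks]
      by_cases hik : i = k
      · exact Or.inl hik
      · refine Or.inr ⟨?_, h2, h3⟩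
        have hlt : i < k := by omega
        have hmod : i ≡ k [MOD (N - 1)] := by rw [Nat.ModEq, h3, hkr]
        have hd := (Nat.modEq_iff_dvd' hlt.le).1 hmod
        have := Nat.le_of_dvd (by omega) hd
        omega
    have hcard : (resBlocks N ω r (n + 1)).card ≤ (resBlocks N ω r k).card + 1 :=
      (Finset.card_le_card hsub).trans (Finset.card_insert_le _ _)
    have hik := ih k (by omega)
    rw [← hkn] at hcard ⊢
    have hb := hblock _ hinj ((prefixProdInv N ω k).mulVec v)
    rw [Matrix.mulVec_mulVec, ← prefixProdInv_add] at hb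
    refine hb.trans ((mul_le_mul_of_nonneg_left hik (by positivity)).trans ?_)
    have hp : β ^ (2 * (N - 1) * ((resBlocks N ω r k).card + 1)) ≤
        β ^ (2 * (N - 1) * (resBlocks N ω r (k + (N - 1))).card) :=
      pow_le_pow_of_le_one hβ0.le hβ1.le (Nat.mul_le_mul_left _ hcard)
    calc _ = ((N : ℝ) + 2) ^ (2 * (k + (N - 1))) *
          β ^ (2 * (N - 1) * ((resBlocks N ω r k).card + 1)) * energy N v v := by
            rw [mul_pow]; ring
      _ ≤ _ := by gcongr
  · have hsub : resBlocks N ω r (n + 1) ⊆ resBlocks N ω r n := by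
      intro i hi
      have hne : i + (N - 1) ≠ n + 1 := fun h => hg ⟨i, hi, h⟩
      rw [mem_resBlocks] at hi ⊢
      exact ⟨by omega, hi.2⟩
    have hcard := Finset.card_le_card hsub
    have hik := ih n (by omega)
    refine (energy_prefix_succ N ω n v).trans
      ((mul_le_mul_of_nonneg_left hik (by positivity)).trans ?_)
    have hp : β ^ (2 * (N - 1) * (resBlocks N ω r n).card) ≤
        β ^ (2 * (N - 1) * (resBlocks N ω r (n + 1)).card) :=
      pow_le_pow_of_le_one hβ0.le hβ1.le (Nat.mul_le_mul_left _ hcard)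
    calc _ = ((N : ℝ) + 2) ^ (2 * (n + 1)) *
          β ^ (2 * (N - 1) * (resBlocks N ω r n).card) * energy N v v := by ring
      _ ≤ _ := by gcongr

theorem exists_residue (N : ℕ) (hN : 3 ≤ N) (ω : ℕ → Fin N) (n : ℕ) :
    ∃ r, blockCount N ω n ≤ (N - 1) * (resBlocks N ω r n).card := by
  by_contra! h
  have h1 : blockCount N ω n = ∑ r ∈ Finset.range (N - 1), (resBlocks N ω r n).card := by
    unfold blockCount resBlocks
    exact Finset.card_eq_sum_card_fiberwise
      (fun i _ => Finset.mem_coe.2 (Finset.mem_range.2 (Nat.mod_lt _ (by omega))))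
  have h2 : ∑ r ∈ Finset.range (N - 1), (N - 1) * (resBlocks N ω r n).card <
      ∑ r ∈ Finset.range (N - 1), blockCount N ω n :=
    Finset.sum_lt_sum_of_nonempty ⟨0, Finset.mem_range.2 (by omega)⟩ fun r _ => h r
  rw [← Finset.mul_sum, ← h1] at h2
  simp at h2

theorem prefix_energy_bound_via_blockCount (N : ℕ) (hN : 3 ≤ N) (β : ℝ)
    (hβ0 : 0 < β) (hβ1 : β < 1)
    (hblock : ∀ u : Fin (N - 1) → Fin N, Function.Injective u →
      ∀ v : Fin N → ℝ,
        energy N ((wordProdInv N u).mulVec v) ((wordProdInv N u).mulVec v) ≤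
          (((N : ℝ) + 2) * β) ^ (2 * (N - 1)) * energy N v v)
    (ω : ℕ → Fin N) (n : ℕ) (hn : 1 ≤ n) (v : Fin N → ℝ) :
    energy N ((prefixProdInv N ω n).mulVec v) ((prefixProdInv N ω n).mulVec v) ≤
      (((N : ℝ) + 2) ^ n * β ^ blockCount N ω n) ^ 2 * energy N v v := by
  obtain ⟨r, hr⟩ := exists_residue N hN ω n
  refine (residue_bound N hN β hβ0 hβ1 hblock ω v r n).trans ?_
  refine mul_le_mul_of_nonneg_right ?_ (energy_self_nonneg N v)
  rw [mul_pow, ← pow_mul, ← pow_mul, mul_comm n 2]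
  refine mul_le_mul_of_nonneg_left ?_ (by positivity)
  refine pow_le_pow_of_le_one hβ0.le hβ1.le ?_
  rw [mul_assoc]
  omega
end

section
/- Let μ be the infinite product over ℕ of the uniform probability measure on {0,…,N−1}. Then for μ-almost every infinite word ω, liminf_{n→∞} C_N(ω,n)/n ≥ N!/((N−1)·N^{N−1}). -/
open Filter MeasureTheory
open scoped ENNReal

/-- The `k`-th disjoint block of length `K`. -/
def blk {N : ℕ} (K k : ℕ) (ω : ℕ → Fin N) : Fin K → Fin N := fun j => ω (K * k + j)

lemma measurable_blk {N : ℕ} (K k : ℕ) : Measurable (blk (N := N) K k) := by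
  unfold blk; fun_prop

lemma blk_law {N : ℕ} (K : ℕ) (hK : 0 < K) (μ : Measure (ℕ → Fin N))
    (hμ : ∀ (s : Finset ℕ) (g : ℕ → Fin N),
      μ {ω | ∀ i ∈ s, ω i = g i} = ((N : ℝ≥0∞))⁻¹ ^ s.card)
    (T : Finset ℕ) (c : ℕ → Fin K → Fin N) :
    μ {ω | ∀ k ∈ T, blk K k ω = c k} = ((N : ℝ≥0∞))⁻¹ ^ (T.card * K) := by
  have hd : ∀ (k : ℕ) (j : Fin K), (K * k + j) / K = k := fun k j => by
    rw [Nat.mul_add_div hK, Nat.div_eq_of_lt j.2, add_zero]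
  have hm : ∀ (k : ℕ) (j : Fin K), (K * k + j) % K = j := fun k j => by
    rw [Nat.mul_add_mod, Nat.mod_eq_of_lt j.2]
  have h := hμ ((T ×ˢ (Finset.univ : Finset (Fin K))).image fun p => K * p.1 + p.2)
    (fun t => c (t / K) ⟨t % K, Nat.mod_lt _ hK⟩)
  rw [Finset.card_image_of_injective, Finset.card_product, Finset.card_univ,
    Fintype.card_fin] at h
  · rw [← h]
    congr 1
    ext ω
    simp only [Set.mem_ofPred_eq, Finset.mem_image, Finset.mem_product, Finset.mem_univ,
      and_true, Prod.exists]
    constructor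
    · rintro H t ⟨k, j, hk, rfl⟩
      simp only [hd, hm]
      exact congrFun (H k hk) j
    · intro H k hk
      funext j
      have := H _ ⟨k, j, hk, rfl⟩
      simp only [hd, hm] at this
      exact this
  · rintro ⟨k, j⟩ ⟨k', j'⟩ e
    simp only at e
    have h1 := hd k j
    have h2 := hm k j
    rw [e, hd] at h1
    rw [e, hm] at h2
    exact Prod.ext h1.symm (Fin.ext h2.symm)

lemma blk_single {N : ℕ} (K : ℕ) (hK : 0 < K) (μ : Measure (ℕ → Fin N))
    (hμ : ∀ (s : Finset ℕ) (g : ℕ → Fin N),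
      μ {ω | ∀ i ∈ s, ω i = g i} = ((N : ℝ≥0∞))⁻¹ ^ s.card)
    (k : ℕ) (a : Fin K → Fin N) :
    μ.map (blk K k) {a} = ((N : ℝ≥0∞))⁻¹ ^ K := by
  rw [Measure.map_apply (measurable_blk K k) (measurableSet_singleton a)]
  have := blk_law K hK μ hμ {k} (fun _ => a)
  simp only [Finset.mem_singleton, forall_eq, Finset.card_singleton, one_mul] at this
  exact this

lemma blk_indep {N : ℕ} (K : ℕ) (hK : 0 < K) (μ : Measure (ℕ → Fin N)) [IsProbabilityMeasure μ]
    (hμ : ∀ (s : Finset ℕ) (g : ℕ → Fin N),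
      μ {ω | ∀ i ∈ s, ω i = g i} = ((N : ℝ≥0∞))⁻¹ ^ s.card)
    (k l : ℕ) (hkl : k ≠ l) :
    ProbabilityTheory.IndepFun (blk (N := N) K k) (blk K l) μ := by
  rw [ProbabilityTheory.indepFun_iff_map_prod_eq_prod_map_map
    (measurable_blk K k).aemeasurable (measurable_blk K l).aemeasurable]
  refine Measure.ext_of_singleton ?_
  rintro ⟨a, b⟩
  rw [← Set.singleton_prod_singleton, Measure.prod_prod, blk_single K hK μ hμ,
    blk_single K hK μ hμ, Set.singleton_prod_singleton,
    Measure.map_apply ((measurable_blk K k).prodMk (measurable_blk K l))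
      (measurableSet_singleton _)]
  have := blk_law K hK μ hμ {k, l} (fun i => if i = k then a else b)
  rw [Finset.card_pair hkl, two_mul, pow_add] at this
  rw [← this]
  congr 1
  ext ω
  simp [hkl.symm]

/-- Indicator of injectivity. -/
noncomputable def injInd (K N : ℕ) (a : Fin K → Fin N) : ℝ :=
  Set.indicator {b : Fin K → Fin N | Function.Injective b} (1 : (Fin K → Fin N) → ℝ) a

lemma card_inj (N : ℕ) (hN : 3 ≤ N) :
    Set.ncard {a : Fin (N - 1) → Fin N | Function.Injective a} = N.factorial := by
  have e : {a : Fin (N - 1) → Fin N | Function.Injective a} ≃ (Fin (N - 1) ↪ Fin N) :=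
    Equiv.subtypeInjectiveEquivEmbedding _ _
  rw [← Nat.card_coe_set_eq, Nat.card_congr e, Nat.card_eq_fintype_card, Fintype.card_embedding_eq]
  simp only [Fintype.card_fin]
  have := Nat.factorial_mul_descFactorial (Nat.sub_le N 1)
  rw [show N - (N - 1) = 1 by omega] at this
  simpa using this

lemma expect {N : ℕ} (hN : 3 ≤ N) (μ : Measure (ℕ → Fin N)) [IsProbabilityMeasure μ]
    (hμ : ∀ (s : Finset ℕ) (g : ℕ → Fin N),
      μ {ω | ∀ i ∈ s, ω i = g i} = ((N : ℝ≥0∞))⁻¹ ^ s.card) :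
    ∫ ω, injInd (N - 1) N (blk (N - 1) 0 ω) ∂μ = (N.factorial : ℝ) / (N : ℝ) ^ (N - 1) := by
  have hK : 0 < N - 1 := by omega
  rw [← integral_map (φ := blk (N - 1) 0) (measurable_blk _ _).aemeasurable
    (Measurable.of_discrete.aestronglyMeasurable)]
  have : IsProbabilityMeasure (μ.map (blk (N - 1) 0)) :=
    Measure.isProbabilityMeasure_map (measurable_blk _ _).aemeasurable
  unfold injInd
  rw [integral_indicator_one (Set.toFinite _).measurableSet]
  classical
  have hf := (Set.toFinite {a : Fin (N - 1) → Fin N | Function.Injective a}).coe_toFinset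
  rw [← card_inj N hN, Set.ncard_eq_toFinset_card _ (Set.toFinite _)]
  rw [← hf, ← sum_measureReal_singleton]
  simp only [Measure.real, blk_single _ hK μ hμ]
  simp [div_eq_mul_inv]

lemma count_ge {N : ℕ} (hN : 3 ≤ N) (ω : ℕ → Fin N) (n : ℕ) :
    ∑ k ∈ Finset.range (n / (N - 1)), injInd (N - 1) N (blk (N - 1) k ω) ≤ blockCount N ω n := by
  classical
  have hK : 0 < N - 1 := by omega
  unfold injInd
  simp only [Set.indicator_apply, Set.mem_ofPred_eq, Pi.one_apply]
  rw [Finset.sum_boole]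
  norm_cast
  unfold blockCount
  refine Finset.card_le_card_of_injOn (fun k => (N - 1) * k) ?_ ?_
  · intro k hk
    simp only [Finset.coe_filter, Finset.mem_range, Set.mem_ofPred_eq] at hk ⊢
    have h1 : (k + 1) * (N - 1) ≤ n := (Nat.le_div_iff_mul_le hK).1 hk.1
    rw [add_mul, one_mul, mul_comm] at h1
    refine ⟨by omega, by omega, hk.2⟩
  · intro a _ b _ h
    exact Nat.eq_of_mul_eq_mul_left hK h

lemma count_le {N : ℕ} (ω : ℕ → Fin N) (n : ℕ) : (blockCount N ω n : ℝ) / n ≤ 1 := by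
  refine div_le_one_of_le₀ ?_ (Nat.cast_nonneg _)
  unfold blockCount
  exact_mod_cast (Finset.card_filter_le _ _).trans (Finset.card_range n).le

theorem blockCount_liminf_ae (N : ℕ) (hN : 3 ≤ N)
    (μ : Measure (ℕ → Fin N)) [IsProbabilityMeasure μ]
    (hμ : ∀ (s : Finset ℕ) (g : ℕ → Fin N),
      μ {ω | ∀ i ∈ s, ω i = g i} = ((N : ℝ≥0∞))⁻¹ ^ s.card) :
    ∀ᵐ ω ∂μ,
      (N.factorial : ℝ) / (((N : ℝ) - 1) * (N : ℝ) ^ (N - 1)) ≤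
        Filter.liminf (fun n : ℕ => (blockCount N ω n : ℝ) / n) Filter.atTop := by
  have hK : 0 < N - 1 := by omega
  have hmeas : Measurable (injInd (N - 1) N) := Measurable.of_discrete
  have hslln := ProbabilityTheory.strong_law_ae_real (μ := μ)
    (fun k ω => injInd (N - 1) N (blk (N - 1) k ω)) ?_ ?_ ?_
  · filter_upwards [hslln] with ω hω
    rw [expect hN μ hμ] at hω
    have hdiv : Tendsto (fun n : ℕ => n / (N - 1)) atTop atTop :=
      Nat.tendsto_div_const_atTop hK.ne'
    have h1 := hω.comp hdiv
    have h2 : Tendsto (fun n : ℕ => ((n / (N - 1) : ℕ) : ℝ) / n) atTop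
        (nhds (((N : ℝ) - 1)⁻¹)) := by
      have h0 : (0 : ℝ) ≤ ((N : ℝ) - 1)⁻¹ := by
        have : (3 : ℝ) ≤ N := by exact_mod_cast hN
        exact inv_nonneg.2 (by linarith)
      have := (tendsto_nat_floor_mul_div_atTop h0).comp tendsto_natCast_atTop_atTop
      refine this.congr fun n => ?_
      simp only [Function.comp]
      rw [← Nat.floor_div_eq_div (K := ℝ), Nat.cast_sub (by omega), Nat.cast_one,
        div_eq_inv_mul (n : ℝ)]
    have h3 := h1.mul h2
    have e : (N.factorial : ℝ) / (((N : ℝ) - 1) * (N : ℝ) ^ (N - 1)) =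
        (N.factorial : ℝ) / (N : ℝ) ^ (N - 1) * ((N : ℝ) - 1)⁻¹ := by
      rw [div_mul_eq_div_div_swap, div_eq_mul_inv _ ((N : ℝ) - 1)]
    rw [e, ← h3.liminf_eq]
    refine liminf_le_liminf ?_ h3.isBoundedUnder_ge ?_
    · filter_upwards [hdiv.eventually_gt_atTop 0] with n hn
      have hn' : ((n / (N - 1) : ℕ) : ℝ) ≠ 0 := by exact_mod_cast hn.ne'
      simp only [Function.comp]
      rw [div_mul_div_cancel₀ hn']
      exact div_le_div_of_nonneg_right (count_ge hN ω n) (Nat.cast_nonneg _)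
    · exact (isBoundedUnder_of ⟨1, fun n => count_le ω n⟩ :
        IsBoundedUnder (· ≤ ·) atTop _).isCoboundedUnder_ge
  · refine Integrable.of_bound (hmeas.comp (measurable_blk _ _)).aestronglyMeasurable 1 ?_
    refine Eventually.of_forall fun ω => ?_
    unfold injInd
    simp only [Set.indicator_apply]
    split_ifs <;> simp
  · intro k l hkl
    exact (blk_indep _ hK μ hμ k l hkl).comp hmeas hmeas
  · intro k
    refine ProbabilityTheory.IdentDistrib.comp (u := injInd (N - 1) N)
      ⟨(measurable_blk _ _).aemeasurable, (measurable_blk _ _).aemeasurable, ?_⟩ hmeas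
    refine Measure.ext_of_singleton fun a => ?_
    rw [blk_single _ hK μ hμ, blk_single _ hK μ hμ]
end

section
/- Let N = 3 and let A_0, A_1, A_2 be the harmonic extension matrices for SG_3. For i, j ∈ {0,1,2}, the least constant K ≥ 0 such that E((A_i A_j)^{−1} v) ≤ K² E(v) for all v ∈ ℝ³ (the E-operator norm of (A_iA_j)^{−1}) equals 25 when i = j, and equals (25/9)·√(17 + 4√13) when i ≠ j. -/
open Matrix Filter

/-- Explicit inverse of `harmA 3 i`. -/
noncomputable def harmB (i : Fin 3) : Matrix (Fin 3) (Fin 3) ℝ :=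
  Matrix.of fun j k =>
    if j = i then (if k = i then 1 else 0)
    else if k = i then -2 / 3
    else if j = k then 10 / 3 else -5 / 3

lemma fin3_cases (i : Fin 3) : i = 0 ∨ i = 1 ∨ i = 2 := by
  revert i; decide

lemma fin_ne_facts : (0 : Fin 3) ≠ 1 ∧ (0 : Fin 3) ≠ 2 ∧ (1 : Fin 3) ≠ 0 ∧ (1 : Fin 3) ≠ 2 ∧
    (2 : Fin 3) ≠ 0 ∧ (2 : Fin 3) ≠ 1 := by decide

lemma harmA_mul_harmB (i : Fin 3) : harmA 3 i * harmB i = 1 := by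
  ext j k
  rcases fin3_cases i with rfl | rfl | rfl <;> rcases fin3_cases j with rfl | rfl | rfl <;>
    rcases fin3_cases k with rfl | rfl | rfl <;>
    norm_num [harmA, harmB, Matrix.mul_apply, Fin.sum_univ_three, Matrix.one_apply, fin_ne_facts]

lemma harm_inv (i j : Fin 3) : (harmA 3 i * harmA 3 j)⁻¹ = harmB j * harmB i := by
  apply Matrix.inv_eq_right_inv
  calc harmA 3 i * harmA 3 j * (harmB j * harmB i)
      = harmA 3 i * (harmA 3 j * harmB j) * harmB i := by simp only [Matrix.mul_assoc]
    _ = 1 := by rw [harmA_mul_harmB, Matrix.mul_one, harmA_mul_harmB]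

lemma energy_three (v : Fin 3 → ℝ) :
    energy 3 v v = (v 0 - v 1) ^ 2 + (v 0 - v 2) ^ 2 + (v 1 - v 2) ^ 2 := by
  simp [energy, Fin.sum_univ_three]
  ring

lemma mulVec_three (i j : Fin 3) (v : Fin 3 → ℝ) (k : Fin 3) :
    ((harmB j * harmB i).mulVec v) k =
      harmB j k 0 * (harmB i 0 0 * v 0 + harmB i 0 1 * v 1 + harmB i 0 2 * v 2) +
      harmB j k 1 * (harmB i 1 0 * v 0 + harmB i 1 1 * v 1 + harmB i 1 2 * v 2) +
      harmB j k 2 * (harmB i 2 0 * v 0 + harmB i 2 1 * v 1 + harmB i 2 2 * v 2) := by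
  rw [← Matrix.mulVec_mulVec]
  simp [Matrix.mulVec, dotProduct, Fin.sum_univ_three]

lemma least_eq (Q E : (Fin 3 → ℝ) → ℝ) (K t : ℝ) (ht : 0 ≤ t)
    (hK : IsLeast {k : ℝ | 0 ≤ k ∧ ∀ v, Q v ≤ k ^ 2 * E v} K)
    (h1 : ∀ v, Q v ≤ t ^ 2 * E v) (v : Fin 3 → ℝ) (hv : 0 < E v)
    (h2 : t ^ 2 * E v ≤ Q v) : K = t := by
  apply le_antisymm
  · exact hK.2 ⟨ht, h1⟩
  · have h3 := h2.trans (hK.1.2 v)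
    exact (sq_le_sq₀ ht hK.1.1).1 (le_of_mul_le_mul_right h3 hv)

/-- Energy after the transformation, in the coordinates relative to the vertex `i`. -/
lemma energy_ne (i j l : Fin 3) (hij : i ≠ j) (hil : i ≠ l) (hjl : j ≠ l) (v : Fin 3 → ℝ) :
    energy 3 ((harmB j * harmB i).mulVec v) ((harmB j * harmB i).mulVec v) =
      625 / 81 * (26 * (v j - v i) ^ 2 - 74 * (v j - v i) * (v l - v i)
        + 62 * (v l - v i) ^ 2) := by
  rw [energy_three]
  simp only [mulVec_three]
  rcases fin3_cases i with rfl | rfl | rfl <;> rcases fin3_cases j with rfl | rfl | rfl <;>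
    rcases fin3_cases l with rfl | rfl | rfl <;>
    first | contradiction | (norm_num [harmB, fin_ne_facts]; ring)

lemma energy_eq_s12 (i j l : Fin 3) (hij : i ≠ j) (hil : i ≠ l) (hjl : j ≠ l) (v : Fin 3 → ℝ) :
    energy 3 ((harmB i * harmB i).mulVec v) ((harmB i * harmB i).mulVec v) =
      625 * (3 / 2 * (v j - v l) ^ 2 + 1 / 162 * (v j + v l - 2 * v i) ^ 2) := by
  rw [energy_three]
  simp only [mulVec_three]
  rcases fin3_cases i with rfl | rfl | rfl <;> rcases fin3_cases j with rfl | rfl | rfl <;>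
    rcases fin3_cases l with rfl | rfl | rfl <;>
    first | contradiction | (norm_num [harmB, fin_ne_facts]; ring)

lemma energy_base (i j l : Fin 3) (hij : i ≠ j) (hil : i ≠ l) (hjl : j ≠ l) (v : Fin 3 → ℝ) :
    energy 3 v v = (v j - v i) ^ 2 + (v l - v i) ^ 2 + (v j - v l) ^ 2 := by
  rw [energy_three]
  rcases fin3_cases i with rfl | rfl | rfl <;> rcases fin3_cases j with rfl | rfl | rfl <;>
    rcases fin3_cases l with rfl | rfl | rfl <;> first | contradiction | ring

lemma exists_two (i : Fin 3) : ∃ j l : Fin 3, i ≠ j ∧ i ≠ l ∧ j ≠ l := by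
  revert i; decide

lemma exists_third (i j : Fin 3) (h : i ≠ j) : ∃ l : Fin 3, i ≠ l ∧ j ≠ l := by
  revert i j; decide

theorem energy_opNorm_second_level_SG3 (i j : Fin 3) (K : ℝ)
    (hK : IsLeast {k : ℝ | 0 ≤ k ∧ ∀ v : Fin 3 → ℝ,
      energy 3 ((harmA 3 i * harmA 3 j)⁻¹.mulVec v)
          ((harmA 3 i * harmA 3 j)⁻¹.mulVec v) ≤ k ^ 2 * energy 3 v v} K) :
    K = if i = j then 25 else (25 / 9) * Real.sqrt (17 + 4 * Real.sqrt 13) := by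
  rw [harm_inv] at hK
  split_ifs with h
  · subst h
    obtain ⟨j, l, hij, hil, hjl⟩ := exists_two i
    refine least_eq (fun v => energy 3 ((harmB i * harmB i).mulVec v)
      ((harmB i * harmB i).mulVec v)) (fun v => energy 3 v v) K 25 (by norm_num) hK ?_
      (fun k => if k = i then 0 else if k = j then 1 else -1) ?_ ?_
    · intro v
      simp only [energy_eq_s12 i j l hij hil hjl, energy_base i j l hij hil hjl]
      nlinarith [sq_nonneg (v j + v l - 2 * v i)]
    · simp only [energy_base i j l hij hil hjl]
      simp [hij.symm, hil.symm, hjl.symm]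
      norm_num
    · simp only [energy_eq_s12 i j l hij hil hjl, energy_base i j l hij hil hjl]
      simp [hij.symm, hil.symm, hjl.symm]
      norm_num
  · obtain ⟨l, hil, hjl⟩ := exists_third i j h
    have hs0 : 0 ≤ Real.sqrt 13 := Real.sqrt_nonneg _
    have hs : Real.sqrt 13 ^ 2 = 13 := Real.sq_sqrt (by norm_num)
    have hT : (25 / 9 * Real.sqrt (17 + 4 * Real.sqrt 13)) ^ 2
        = 625 / 81 * (17 + 4 * Real.sqrt 13) := by
      rw [mul_pow, Real.sq_sqrt (by positivity)]; norm_num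
    refine least_eq (fun v => energy 3 ((harmB j * harmB i).mulVec v)
      ((harmB j * harmB i).mulVec v)) (fun v => energy 3 v v) K _ (by positivity) hK ?_
      (fun k => if k = i then 0 else if k = j then Real.sqrt 13 - 5
        else 2 + 2 * Real.sqrt 13) ?_ ?_
    · intro v
      simp only [energy_ne i j l h hil hjl, energy_base i j l h hil hjl, hT]
      generalize Real.sqrt 13 = s at *
      have hx : v j - v l = (v j - v i) - (v l - v i) := by ring
      rw [hx]
      generalize v j - v i = x
      generalize v l - v i = y
      have key : 0 ≤ (2 + 2 * s) * x ^ 2 - (2 * s - 10) * x * y + (2 * s - 7) * y ^ 2 := by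
        have h1 : (2 + 2 * s) * ((2 + 2 * s) * x ^ 2 - (2 * s - 10) * x * y + (2 * s - 7) * y ^ 2)
            = ((2 + 2 * s) * x - (s - 5) * y) ^ 2 := by
          linear_combination (3 * y ^ 2) * hs
        have h2 : 0 < 2 + 2 * s := by positivity
        exact nonneg_of_mul_nonneg_right (h1 ▸ sq_nonneg _) h2
      nlinarith [key]
    · simp only [energy_base i j l h hil hjl]
      simp [Ne.symm h, hil.symm, hjl.symm]
      positivity
    · simp only [energy_ne i j l h hil hjl, energy_base i j l h hil hjl, hT]
      simp [Ne.symm h, hil.symm, hjl.symm]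
      generalize Real.sqrt 13 = s at *
      apply le_of_eq
      have hs3 : s ^ 3 = 13 * s := by linear_combination s * hs
      ring_nf
      rw [hs3, hs]
      ring
end
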